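/- A closed embedded surface in a simply connected closed 3-manifold separates it: let M be a nonempty compact, Hausdorff, second countable, connected topological space locally homeomorphic to Euclidean 3-space that is simply connected, and let N ⊆ M be a nonempty closed subset which, with the subspace topology, is a compact connected 2-manifold (Hausdorff, second countable, locally homeomorphic to Euclidean 2-space). Then the complement M \ N is disconnected. -/

import Mathlib

noncomputable section

/-- Mod 2 chains on ordered tuples of points, including the empty tuple (augmented complex). -/
abbrev TupleChain (X : Type*) := List X →₀ ZMod 2

namespace TupleChain

open Finsupp

variable {X Y Z : Type*}

/-- The chain consisting of one tuple. -/
abbrev tup (l : List X) : TupleChain X := single l 1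

theorem two_zsmul_zero {V : Type*} [AddCommGroup V] [Module (ZMod 2) V] (x : V) :
    (2 : ℤ) • x = 0 := by rw [two_zsmul, ZModModule.add_self]

theorem eq_of_add_eq_zero_two {V : Type*} [AddCommGroup V] [Module (ZMod 2) V] {x y : V}
    (h : x + y = 0) : x = y := by
  rw [← sub_eq_zero, ZModModule.sub_eq_add, h]

theorem hom_ext {V : Type*} [AddCommMonoid V] [Module (ZMod 2) V]
    {S T : TupleChain X →ₗ[ZMod 2] V} (h : ∀ l, S (tup l) = T (tup l)) : S = T := by
  apply Finsupp.lhom_ext'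
  intro l
  ext
  simpa using h l

/-- Chains all of whose tuples lie in `s`. -/
abbrev on (s : Set (List X)) : Submodule (ZMod 2) (TupleChain X) := supported (ZMod 2) (ZMod 2) s

theorem tup_mem_on {s : Set (List X)} {l : List X} (h : l ∈ s) : tup l ∈ on s :=
  single_mem_supported _ _ h

theorem on_mono {s t : Set (List X)} (h : s ⊆ t) {c : TupleChain X} (hc : c ∈ on s) : c ∈ on t :=
  supported_mono h hc

theorem mem_on_inter {s t : Set (List X)} {c : TupleChain X} (hs : c ∈ on s) (ht : c ∈ on t) :
    c ∈ on (s ∩ t) := by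
  rw [on, supported_inter]
  exact ⟨hs, ht⟩

theorem map_mem_of_on {V : Type*} [AddCommMonoid V] [Module (ZMod 2) V] {s : Set (List X)}
    {t : Submodule (ZMod 2) V}
    (T : TupleChain X →ₗ[ZMod 2] V) (h : ∀ l ∈ s, T (tup l) ∈ t) {c : TupleChain X}
    (hc : c ∈ on s) : T c ∈ t := by
  rw [on, supported_eq_span_single] at hc
  have : Submodule.span (ZMod 2) ((fun l : List X => single l (1 : ZMod 2)) '' s) ≤ t.comap T := by
    rw [Submodule.span_le]
    rintro _ ⟨l, hl, rfl⟩
    exact h l hl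
  exact this hc

theorem eq_of_on {V : Type*} [AddCommMonoid V] [Module (ZMod 2) V] {s : Set (List X)}
    (S T : TupleChain X →ₗ[ZMod 2] V) (h : ∀ l ∈ s, S (tup l) = T (tup l)) {c : TupleChain X}
    (hc : c ∈ on s) : S c = T c := by
  rw [on, supported_eq_span_single] at hc
  refine LinearMap.eqOn_span (f := S) (g := T) ?_ hc
  rintro _ ⟨l, hl, rfl⟩
  exact h l hl

/-- Prepend a vertex to all tuples. -/
def cons (v : X) : TupleChain X →ₗ[ZMod 2] TupleChain X := lmapDomain _ _ (List.cons v)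

@[simp] theorem cons_tup (v : X) (l : List X) : cons v (tup l) = tup (v :: l) := by
  simp [cons]

/-- The boundary of a tuple. -/
def bdryTup : List X → TupleChain X
  | [] => 0
  | v :: l => tup l + cons v (bdryTup l)

/-- The (augmented) boundary operator. -/
def bdry : TupleChain X →ₗ[ZMod 2] TupleChain X := linearCombination (ZMod 2) bdryTup

@[simp] theorem bdry_nil : bdry (tup ([] : List X)) = 0 := by simp [bdry, bdryTup]

@[simp] theorem bdry_tup_cons (v : X) (l : List X) :
    bdry (tup (v :: l)) = tup l + cons v (bdry (tup l)) := by
  simp [bdry, bdryTup]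

theorem bdry_cons (v : X) (c : TupleChain X) : bdry (cons v c) = c + cons v (bdry c) := by
  have : bdry ∘ₗ cons v = LinearMap.id + cons v ∘ₗ bdry := hom_ext fun l => by simp
  exact LinearMap.congr_fun this c

@[simp] theorem bdry_bdry (c : TupleChain X) : bdry (bdry c) = 0 := by
  have : bdry ∘ₗ bdry = (0 : TupleChain X →ₗ[ZMod 2] _) := hom_ext fun l => by
    induction l with
    | nil => simp
    | cons v l ih =>
      simp only [LinearMap.comp_apply, LinearMap.zero_apply] at ih
      simp [bdry_cons, ih, ZModModule.add_self]
  exact LinearMap.congr_fun this c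

/-- The chain map induced by a map of vertices. -/
def push (g : X → Y) : TupleChain X →ₗ[ZMod 2] TupleChain Y := lmapDomain _ _ (List.map g)

@[simp] theorem push_tup (g : X → Y) (l : List X) : push g (tup l) = tup (l.map g) := by
  simp [push]

theorem push_cons (g : X → Y) (v : X) (c : TupleChain X) :
    push g (cons v c) = cons (g v) (push g c) := by
  have : push g ∘ₗ cons v = cons (g v) ∘ₗ push g := hom_ext fun l => by simp
  exact LinearMap.congr_fun this c

theorem bdry_push (g : X → Y) (c : TupleChain X) : bdry (push g c) = push g (bdry c) := by
  have : bdry ∘ₗ push g = push g ∘ₗ bdry := hom_ext fun l => by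
    induction l with
    | nil => simp
    | cons v l ih =>
      simp only [LinearMap.comp_apply, push_tup] at ih
      simp [push_cons, ih]
  exact LinearMap.congr_fun this c

theorem push_push (g : X → Y) (h : Y → Z) (c : TupleChain X) :
    push h (push g c) = push (h ∘ g) c := by
  have : push h ∘ₗ push g = push (h ∘ g) := hom_ext fun l => by simp
  exact LinearMap.congr_fun this c

theorem push_id (c : TupleChain X) : push (fun x => x) c = c := by
  have : push (fun x : X => x) = LinearMap.id := hom_ext fun l => by simp
  exact LinearMap.congr_fun this c

/-- Multiply each tuple by the value of `a` at its first vertex. -/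
def cap (a : X → ZMod 2) : TupleChain X →ₗ[ZMod 2] TupleChain X :=
  linearCombination (ZMod 2) fun l => (l.head?.elim 0 a) • tup l

@[simp] theorem cap_nil (a : X → ZMod 2) : cap a (tup []) = 0 := by simp [cap]

@[simp] theorem cap_tup_cons (a : X → ZMod 2) (v : X) (l : List X) :
    cap a (tup (v :: l)) = a v • tup (v :: l) := by simp [cap]

theorem cap_cons (a : X → ZMod 2) (v : X) (c : TupleChain X) :
    cap a (cons v c) = a v • cons v c := by
  have : cap a ∘ₗ cons v = a v • cons v := hom_ext fun l => by
    simp only [LinearMap.comp_apply, cons_tup, cap_tup_cons, LinearMap.smul_apply]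
  exact LinearMap.congr_fun this c

theorem cap_add_apply (a b : X → ZMod 2) (c : TupleChain X) :
    cap (a + b) c = cap a c + cap b c := by
  have : cap (a + b) = cap a + cap b := hom_ext fun l => by
    cases l with
    | nil => simp only [cap_nil, LinearMap.add_apply, add_zero]
    | cons v l => simp only [cap_tup_cons, LinearMap.add_apply, Pi.add_apply, add_smul]
  exact LinearMap.congr_fun this c

theorem cap_push (g : X → Y) (a : Y → ZMod 2) (c : TupleChain X) :
    cap a (push g c) = push g (cap (a ∘ g) c) := by
  have : cap a ∘ₗ push g = push g ∘ₗ cap (a ∘ g) := hom_ext fun l => by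
    cases l with
    | nil => simp only [LinearMap.comp_apply, push_tup, List.map_nil, cap_nil, map_zero]
    | cons v l =>
      simp only [LinearMap.comp_apply, push_tup, List.map_cons, cap_tup_cons, map_smul,
        Function.comp_apply]
  exact LinearMap.congr_fun this c

/-- The cap product with the coboundary of `a`. -/
def kap (a : X → ZMod 2) : TupleChain X →ₗ[ZMod 2] TupleChain X :=
  bdry ∘ₗ cap a + cap a ∘ₗ bdry

theorem kap_apply (a : X → ZMod 2) (c : TupleChain X) :
    kap a c = bdry (cap a c) + cap a (bdry c) := rfl

theorem bdry_cap (a : X → ZMod 2) (c : TupleChain X) :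
    bdry (cap a c) = kap a c + cap a (bdry c) := by
  rw [kap_apply, add_assoc, ZModModule.add_self, add_zero]

@[simp] theorem kap_nil (a : X → ZMod 2) : kap a (tup []) = 0 := by
  simp only [kap_apply, cap_nil, bdry_nil, map_zero, add_zero]

theorem kap_tup_cons (a : X → ZMod 2) (v : X) (l : List X) :
    kap a (tup (v :: l)) = a v • tup l + cap a (tup l) := by
  simp only [kap_apply, cap_tup_cons, map_smul, bdry_tup_cons, map_add, cap_cons, smul_add]
  rw [add_assoc, add_comm (cap a (tup l)), ← add_assoc (a v • (cons v) _), ZModModule.add_self,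
    zero_add]

@[simp] theorem kap_tup_cons_cons (a : X → ZMod 2) (v w : X) (l : List X) :
    kap a (tup (v :: w :: l)) = (a v + a w) • tup (w :: l) := by
  simp only [kap_tup_cons, cap_tup_cons, add_smul]

@[simp] theorem kap_tup_singleton (a : X → ZMod 2) (v : X) :
    kap a (tup [v]) = a v • tup [] := by
  simp only [kap_tup_cons, cap_nil, add_zero]

theorem bdry_kap (a : X → ZMod 2) (c : TupleChain X) : bdry (kap a c) = kap a (bdry c) := by
  simp [kap_apply]

theorem kap_push (g : X → Y) (a : Y → ZMod 2) (c : TupleChain X) :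
    kap a (push g c) = push g (kap (a ∘ g) c) := by
  simp only [kap_apply, cap_push, bdry_push, map_add]

theorem kap_add_apply (a b : X → ZMod 2) (c : TupleChain X) :
    kap (a + b) c = kap a c + kap b c := by
  simp only [kap_apply, cap_add_apply, map_add]
  abel

/-- The prism over a tuple. -/
def prismTup (g h : X → Y) : List X → TupleChain Y
  | [] => 0
  | v :: l => tup (g v :: h v :: l.map h) + cons (g v) (prismTup g h l)

/-- The prism operator, a chain homotopy between `push g` and `push h`. -/
def prism (g h : X → Y) : TupleChain X →ₗ[ZMod 2] TupleChain Y :=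
  linearCombination (ZMod 2) (prismTup g h)

@[simp] theorem prism_nil (g h : X → Y) : prism g h (tup []) = 0 := by simp [prism, prismTup]

@[simp] theorem prism_tup_cons (g h : X → Y) (v : X) (l : List X) :
    prism g h (tup (v :: l)) = tup (g v :: h v :: l.map h) + cons (g v) (prism g h (tup l)) := by
  simp [prism, prismTup]

theorem prism_cons (g h : X → Y) (v : X) (c : TupleChain X) :
    prism g h (cons v c) = cons (g v) (cons (h v) (push h c)) + cons (g v) (prism g h c) := by
  have : prism g h ∘ₗ cons v =
      cons (g v) ∘ₗ cons (h v) ∘ₗ push h + cons (g v) ∘ₗ prism g h := hom_ext fun l => by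
    simp
  exact LinearMap.congr_fun this c

theorem bdry_prism (g h : X → Y) (c : TupleChain X) :
    bdry (prism g h c) = push g c + push h c + prism g h (bdry c) := by
  have : bdry ∘ₗ prism g h = push g + push h + prism g h ∘ₗ bdry := hom_ext fun l => by
    induction l with
    | nil => simp [ZModModule.add_self]
    | cons v l ih =>
      simp only [LinearMap.comp_apply, LinearMap.add_apply, push_tup] at ih
      simp only [LinearMap.comp_apply, LinearMap.add_apply, map_add,
        bdry_cons, ih, prism_cons, ← cons_tup, bdry_push, ← push_tup, push_cons]
      apply eq_of_add_eq_zero_two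
      abel_nf
      simp only [two_zsmul_zero, add_zero]
  exact LinearMap.congr_fun this c

end TupleChain

end

noncomputable section
namespace TupleChain

open Finsupp

variable {X Y Z ι : Type*}

/-- Tuples with all vertices in `A`. -/
def within (A : Set X) : Set (List X) := {l | ∀ v ∈ l, v ∈ A}

/-- Tuples of diameter at most `ε`. -/
def small [PseudoMetricSpace X] (ε : ℝ) : Set (List X) := {l | ∀ v ∈ l, ∀ w ∈ l, dist v w ≤ ε}

/-- Tuples of length `n`. -/
def len (X : Type*) (n : ℕ) : Set (List X) := {l | l.length = n}

/-- A family of tuples closed under passing to tuples with fewer vertices. -/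
def Hered (s : Set (List X)) : Prop := ∀ l ∈ s, ∀ l', l' ⊆ l → l' ∈ s

theorem hered_within (A : Set X) : Hered (within A) := fun _ hl _ h v hv => hl v (h hv)

theorem hered_small [PseudoMetricSpace X] (ε : ℝ) : Hered (small ε : Set (List X)) :=
  fun _ hl _ h v hv w hw => hl v (h hv) w (h hw)

theorem within_mono {A B : Set X} (h : A ⊆ B) : within A ⊆ within B := fun _ hl v hv => h (hl v hv)

theorem small_mono [PseudoMetricSpace X] {ε δ : ℝ} (h : ε ≤ δ) :
    (small ε : Set (List X)) ⊆ small δ :=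
  fun _ hl v hv w hw => (hl v hv w hw).trans h

theorem cons_mem_on {s t : Set (List X)} {v : X} (h : ∀ l ∈ s, v :: l ∈ t) {c : TupleChain X}
    (hc : c ∈ on s) : cons v c ∈ on t :=
  map_mem_of_on _ (fun l hl => by rw [cons_tup]; exact tup_mem_on (h l hl)) hc

theorem bdry_tup_mem (l : List X) : bdry (tup l) ∈ on {l' | l' ⊆ l ∧ l'.length + 1 = l.length} := by
  induction l with
  | nil => simp
  | cons v l ih =>
    rw [bdry_tup_cons]
    refine add_mem (tup_mem_on ⟨List.subset_cons_self _ _, rfl⟩) (cons_mem_on (fun l' h => ?_) ih)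
    exact ⟨List.cons_subset_cons _ h.1, by simp [h.2]⟩

theorem bdry_mem {s : Set (List X)} (hs : Hered s) {c : TupleChain X} (hc : c ∈ on s) :
    bdry c ∈ on s :=
  map_mem_of_on _ (fun l hl => on_mono (fun l' h => hs l hl l' h.1) (bdry_tup_mem l)) hc

theorem bdry_mem_len {n : ℕ} {c : TupleChain X} (hc : c ∈ on (len X (n + 1))) :
    bdry c ∈ on (len X n) :=
  map_mem_of_on _ (fun l hl => on_mono
    (fun l' h => by have := h.2; simp only [len, Set.mem_ofPred_eq] at *; omega)
    (bdry_tup_mem l)) hc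

theorem cap_tup_mem (a : X → ZMod 2) {l : List X} {s : Set (List X)} (h : l ∈ s) :
    cap a (tup l) ∈ on s := by
  cases l with
  | nil => simp only [cap_nil, zero_mem]
  | cons v l => rw [cap_tup_cons]; exact Submodule.smul_mem _ _ (tup_mem_on h)

theorem cap_mem (a : X → ZMod 2) {s : Set (List X)} {c : TupleChain X} (hc : c ∈ on s) :
    cap a c ∈ on s :=
  map_mem_of_on _ (fun _ hl => cap_tup_mem a hl) hc

theorem kap_tup_mem (a : X → ZMod 2) (l : List X) :
    kap a (tup l) ∈ on {l' | l' ⊆ l ∧ l'.length + 1 = l.length} := by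
  cases l with
  | nil => simp only [kap_nil, zero_mem]
  | cons v l =>
    rw [kap_tup_cons]
    have : l ∈ {l' | l' ⊆ v :: l ∧ l'.length + 1 = (v :: l).length} :=
      ⟨List.subset_cons_self _ _, rfl⟩
    exact add_mem (Submodule.smul_mem _ _ (tup_mem_on this)) (cap_tup_mem a this)

theorem kap_mem (a : X → ZMod 2) {s : Set (List X)} (hs : Hered s) {c : TupleChain X}
    (hc : c ∈ on s) : kap a c ∈ on s :=
  map_mem_of_on _ (fun l hl => on_mono (fun l' h => hs l hl l' h.1) (kap_tup_mem a l)) hc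

theorem kap_mem_len (a : X → ZMod 2) {n : ℕ} {c : TupleChain X} (hc : c ∈ on (len X (n + 1))) :
    kap a c ∈ on (len X n) :=
  map_mem_of_on _ (fun l hl => on_mono
    (fun l' h => by have := h.2; simp only [len, Set.mem_ofPred_eq] at *; omega)
    (kap_tup_mem a l)) hc

theorem kap_tup_of_const {a : X → ZMod 2} {l : List X} (h : ∀ v ∈ l, ∀ w ∈ l, a v = a w) :
    kap a (tup l) ∈ on {[]} := by
  match l with
  | [] => simp only [kap_nil, zero_mem]
  | [v] => rw [kap_tup_singleton]; exact Submodule.smul_mem _ _ (tup_mem_on rfl)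
  | v :: w :: l =>
    rw [kap_tup_cons_cons, h v (by simp) w (by simp), ZModModule.add_self, zero_smul]
    exact zero_mem _

/-- A tuple either contributes a degenerate term to `kap a` or `a` is non-constant on it. -/
theorem kap_mem_straddle (a : X → ZMod 2) {s t : Set (List X)} (h0 : [] ∈ t)
    (h : ∀ l ∈ s, (∃ v ∈ l, ∃ w ∈ l, a v ≠ a w) → l ∈ t) (ht : Hered t) {c : TupleChain X}
    (hc : c ∈ on s) : kap a c ∈ on t := by
  refine map_mem_of_on _ (fun l hl => ?_) hc
  by_cases hl' : ∃ v ∈ l, ∃ w ∈ l, a v ≠ a w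
  · exact kap_mem a ht (tup_mem_on (h l hl hl'))
  · push Not at hl'
    exact on_mono (by simpa using h0) (kap_tup_of_const hl')

theorem push_mem (g : X → Y) {s : Set (List X)} {t : Set (List Y)} (h : ∀ l ∈ s, l.map g ∈ t)
    {c : TupleChain X} (hc : c ∈ on s) : push g c ∈ on t :=
  map_mem_of_on _ (fun l hl => by rw [push_tup]; exact tup_mem_on (h l hl)) hc

theorem push_mem_within (g : X → Y) {A : Set X} {B : Set Y} (h : ∀ x ∈ A, g x ∈ B)
    {c : TupleChain X} (hc : c ∈ on (within A)) : push g c ∈ on (within B) :=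
  push_mem g (s := within A) (t := within B) (fun l hl v hv => by
    obtain ⟨w, hw, rfl⟩ := List.mem_map.1 hv
    exact h w (hl w hw)) hc

theorem push_mem_len (g : X → Y) {n : ℕ} {c : TupleChain X} (hc : c ∈ on (len X n)) :
    push g c ∈ on (len Y n) :=
  push_mem g (fun l hl => by simpa [len] using hl) hc

theorem push_mem_small [PseudoMetricSpace X] [PseudoMetricSpace Y] (g : X → Y) {A : Set X}
    {ε δ : ℝ} (h : ∀ x ∈ A, ∀ y ∈ A, dist x y ≤ ε → dist (g x) (g y) ≤ δ)
    {c : TupleChain X} (hc : c ∈ on (within A)) (hc' : c ∈ on (small ε)) :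
    push g c ∈ on (small δ) :=
  push_mem g (s := within A ∩ small ε) (t := small δ) (fun l hl v hv w hw => by
    obtain ⟨v', hv', rfl⟩ := List.mem_map.1 hv
    obtain ⟨w', hw', rfl⟩ := List.mem_map.1 hw
    exact h v' (hl.1 v' hv') w' (hl.1 w' hw') (hl.2 v' hv' w' hw')) (mem_on_inter hc hc')

theorem push_congr {g h : X → Y} {A : Set X} (hgh : ∀ x ∈ A, g x = h x) {c : TupleChain X}
    (hc : c ∈ on (within A)) : push g c = push h c :=
  eq_of_on _ _ (fun l hl => by
    rw [push_tup, push_tup, List.map_congr_left fun v hv => hgh v (hl v hv)]) hc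

theorem prism_tup_mem (g h : X → Y) (l : List X) :
    prism g h (tup l) ∈ on ({l' | ∀ v' ∈ l', ∃ v ∈ l, v' = g v ∨ v' = h v} ∩
      len Y (l.length + 1)) := by
  induction l with
  | nil => simp
  | cons v l ih =>
    rw [prism_tup_cons]
    refine add_mem (tup_mem_on (s := _ ∩ _) ⟨?_, by simp [len]⟩)
      (cons_mem_on (t := _ ∩ _) (fun l' h' => ⟨?_, ?_⟩) ih)
    · intro v' hv'
      simp only [List.mem_cons, List.mem_map] at hv'
      rcases hv' with rfl | rfl | ⟨w, hw, rfl⟩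
      · exact ⟨v, by simp⟩
      · exact ⟨v, by simp⟩
      · exact ⟨w, by simp [hw]⟩
    · intro v' hv'
      rcases List.mem_cons.1 hv' with rfl | hv'
      · exact ⟨v, by simp⟩
      · obtain ⟨w, hw, hw'⟩ := h'.1 v' hv'
        exact ⟨w, by simp [hw], hw'⟩
    · have := h'.2
      simp only [len, Set.mem_ofPred_eq, List.length_cons] at *
      omega

theorem prism_mem_len (g h : X → Y) {n : ℕ} {c : TupleChain X} (hc : c ∈ on (len X n)) :
    prism g h c ∈ on (len Y (n + 1)) :=
  map_mem_of_on _ (fun l hl => on_mono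
    (fun l' hl' => by have := hl'.2; simp only [len, Set.mem_ofPred_eq] at *; omega)
    (prism_tup_mem g h l)) hc

theorem prism_mem_within (g h : X → Y) {A : Set X} {B : Set Y} (hg : ∀ x ∈ A, g x ∈ B)
    (hh : ∀ x ∈ A, h x ∈ B) {c : TupleChain X} (hc : c ∈ on (within A)) :
    prism g h c ∈ on (within B) :=
  map_mem_of_on _ (fun l hl => on_mono (fun l' hl' v' hv' => by
    obtain ⟨v, hv, rfl | rfl⟩ := hl'.1 v' hv'
    exacts [hg v (hl v hv), hh v (hl v hv)]) (prism_tup_mem g h l)) hc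

theorem prism_mem_small [PseudoMetricSpace X] [PseudoMetricSpace Y] (g h : X → Y) {A : Set X}
    {ε δ : ℝ} (hg : ∀ x ∈ A, ∀ y ∈ A, dist x y ≤ ε → dist (g x) (g y) ≤ δ)
    (hh : ∀ x ∈ A, ∀ y ∈ A, dist x y ≤ ε → dist (h x) (h y) ≤ δ)
    (hgh : ∀ x ∈ A, ∀ y ∈ A, dist x y ≤ ε → dist (g x) (h y) ≤ δ)
    {c : TupleChain X} (hc : c ∈ on (within A)) (hc' : c ∈ on (small ε)) :
    prism g h c ∈ on (small δ) :=
  map_mem_of_on (s := within A ∩ small ε) _ (fun l hl => on_mono (fun l' hl' v' hv' w' hw' => by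
    obtain ⟨v, hv, hv'⟩ := hl'.1 v' hv'
    obtain ⟨w, hw, hw'⟩ := hl'.1 w' hw'
    have hd := hl.2 v hv w hw
    have hv := hl.1 v hv
    have hw := hl.1 w hw
    rcases hv' with rfl | rfl <;> rcases hw' with rfl | rfl
    · exact hg v hv w hw hd
    · exact hgh v hv w hw hd
    · rw [dist_comm]; exact hgh w hw v hv (by rwa [dist_comm])
    · exact hh v hv w hw hd) (prism_tup_mem g h l)) (mem_on_inter hc hc')

/-- Iterated cap products with coboundaries. -/
def kaps (a : ι → X → ZMod 2) : List ι → TupleChain X →ₗ[ZMod 2] TupleChain X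
  | [] => LinearMap.id
  | i :: L => kaps a L ∘ₗ kap (a i)

@[simp] theorem kaps_nil (a : ι → X → ZMod 2) (c : TupleChain X) : kaps a [] c = c := rfl

theorem kaps_cons (a : ι → X → ZMod 2) (i : ι) (L : List ι) (c : TupleChain X) :
    kaps a (i :: L) c = kaps a L (kap (a i) c) := rfl

theorem bdry_kaps (a : ι → X → ZMod 2) (L : List ι) (c : TupleChain X) :
    bdry (kaps a L c) = kaps a L (bdry c) := by
  induction L generalizing c with
  | nil => rfl
  | cons i L ih => rw [kaps_cons, kaps_cons, ih, bdry_kap]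

theorem kaps_push (g : X → Y) (a : ι → Y → ZMod 2) (L : List ι) (c : TupleChain X) :
    kaps a L (push g c) = push g (kaps (fun i => a i ∘ g) L c) := by
  induction L generalizing c with
  | nil => rfl
  | cons i L ih => rw [kaps_cons, kaps_cons, kap_push, ih]

theorem kaps_congr {a b : ι → X → ZMod 2} {L : List ι} (h : ∀ i ∈ L, a i = b i)
    (c : TupleChain X) : kaps a L c = kaps b L c := by
  induction L generalizing c with
  | nil => rfl
  | cons i L ih =>
    rw [kaps_cons, kaps_cons, h i (by simp), ih fun j hj => h j (by simp [hj])]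

theorem kaps_mem_nil (a : ι → X → ZMod 2) (L : List ι) {c : TupleChain X} (hc : c ∈ on {[]}) :
    kaps a L c ∈ on {[]} := by
  induction L generalizing c with
  | nil => exact hc
  | cons i L ih =>
    refine ih (map_mem_of_on _ (fun l hl => ?_) hc)
    rw [Set.mem_singleton_iff.1 hl, kap_nil]
    exact zero_mem _

theorem bdry_of_mem_nil {c : TupleChain X} (hc : c ∈ on {[]}) : bdry c = 0 := by
  rw [← LinearMap.zero_apply (σ₁₂ := RingHom.id (ZMod 2)) c]
  refine eq_of_on _ _ (fun l hl => ?_) hc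
  rw [Set.mem_singleton_iff.1 hl, bdry_nil, LinearMap.zero_apply]

theorem bdry_kaps_of_const (a : ι → X → ZMod 2) (L : List ι) {c : TupleChain X}
    (hc : c ∈ on {l | ∃ i ∈ L, ∀ v ∈ l, ∀ w ∈ l, a i v = a i w}) : bdry (kaps a L c) = 0 := by
  have : ∀ l : List X, (∃ i ∈ L, ∀ v ∈ l, ∀ w ∈ l, a i v = a i w) →
      bdry (kaps a L (tup l)) = 0 := by
    clear hc c
    induction L with
    | nil => simp
    | cons j L ih =>
      rintro l ⟨i, hi, h⟩
      rw [kaps_cons]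
      rcases List.mem_cons.1 hi with rfl | hi
      · exact bdry_of_mem_nil (kaps_mem_nil _ _ (kap_tup_of_const h))
      · rw [← LinearMap.comp_apply, ← LinearMap.zero_apply (σ₁₂ := RingHom.id (ZMod 2)) (kap _ _)]
        refine eq_of_on _ _ (fun l' hl' => ?_) (kap_tup_mem (a j) l)
        exact ih l' ⟨i, hi, fun v hv w hw => h v (hl'.1 hv) w (hl'.1 hw)⟩
  rw [← LinearMap.comp_apply, ← LinearMap.zero_apply (σ₁₂ := RingHom.id (ZMod 2)) c]
  exact eq_of_on _ _ (fun l hl => this l hl) hc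

theorem kaps_mem_len (a : ι → X → ZMod 2) (L : List ι) {n : ℕ} {c : TupleChain X}
    (hc : c ∈ on (len X (n + L.length))) : kaps a L c ∈ on (len X n) := by
  induction L generalizing c with
  | nil => exact hc
  | cons i L ih => exact ih (kap_mem_len _ hc)

theorem len_zero : len X 0 = {[]} := by
  ext l
  simp [len, List.length_eq_zero_iff]

theorem bdry_kaps_of_len (a : ι → X → ZMod 2) (L : List ι) {c : TupleChain X}
    (hc : c ∈ on (len X L.length)) : bdry (kaps a L c) = 0 :=
  bdry_of_mem_nil (by
    rw [← len_zero]
    exact kaps_mem_len a L (by rwa [zero_add]))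

/-- The local degree, paired against the cup product of the coboundaries of the `a i`. -/
def deg (a : ι → X → ZMod 2) (L : List ι) : TupleChain X →ₗ[ZMod 2] ZMod 2 :=
  lapply [] ∘ₗ bdry ∘ₗ kaps a L

theorem deg_apply (a : ι → X → ZMod 2) (L : List ι) (c : TupleChain X) :
    deg a L c = bdry (kaps a L c) [] := rfl

theorem deg_bdry (a : ι → X → ZMod 2) (L : List ι) (c : TupleChain X) : deg a L (bdry c) = 0 := by
  rw [deg_apply, ← bdry_kaps, bdry_bdry, coe_zero, Pi.zero_apply]

theorem deg_of_const (a : ι → X → ZMod 2) (L : List ι) {c : TupleChain X}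
    (hc : c ∈ on {l | ∃ i ∈ L, ∀ v ∈ l, ∀ w ∈ l, a i v = a i w}) : deg a L c = 0 := by
  rw [deg_apply, bdry_kaps_of_const a L hc, coe_zero, Pi.zero_apply]

theorem bdry_kaps_eq_zero_of_deg (a : ι → X → ZMod 2) (L : List ι) {c : TupleChain X}
    (hc : c ∈ on (len X (L.length + 1))) (h : deg a L c = 0) : bdry (kaps a L c) = 0 := by
  have := bdry_mem_len (kaps_mem_len a L (n := 1) (by rwa [add_comm]))
  rw [len_zero] at this
  ext l
  by_cases hl : l = []
  · rw [hl]; exact h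
  · exact Finsupp.notMem_support_iff.1 fun h' => hl (this h')

theorem push_nil_apply (g : X → Y) (c : TupleChain X) : push g c [] = c [] := by
  have : (lapply [] : TupleChain Y →ₗ[ZMod 2] _) ∘ₗ push g = lapply [] := hom_ext fun l => by
    cases l <;> simp
  exact LinearMap.congr_fun this c

theorem deg_push (g : X → Y) (a : ι → Y → ZMod 2) (L : List ι) (c : TupleChain X) :
    deg a L (push g c) = deg (fun i => a i ∘ g) L c := by
  rw [deg_apply, kaps_push, bdry_push, push_nil_apply, deg_apply]

/-- The indicator of the half-space `x i ≤ v i`. -/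
def half (x : ι → ℝ) (i : ι) (v : ι → ℝ) : ZMod 2 := if x i ≤ v i then 1 else 0

theorem abs_le_of_half_ne {x v w : ι → ℝ} {i : ι} (h : half x i v ≠ half x i w) :
    |v i - x i| ≤ |v i - w i| := by
  unfold half at h
  split_ifs at h with h1 h2 h2
  · simp at h
  · rw [abs_of_nonneg (by linarith), abs_of_nonneg (by linarith)]; linarith
  · rw [abs_of_nonpos (by linarith), abs_of_nonpos (by linarith)]; linarith
  · simp at h

end TupleChain

end

noncomputable section
namespace TupleChain

open Finsupp

variable {X ι : Type*}

theorem within_inter (A B : Set X) : within (A ∩ B) = within A ∩ within B := by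
  ext l
  exact ⟨fun h => ⟨fun v hv => (h v hv).1, fun v hv => (h v hv).2⟩,
    fun h v hv => ⟨h.1 v hv, h.2 v hv⟩⟩

theorem mem_within_inter {A B : Set X} {c : TupleChain X} (hA : c ∈ on (within A))
    (hB : c ∈ on (within B)) : c ∈ on (within (A ∩ B)) := by
  rw [within_inter]
  exact mem_on_inter hA hB

/-- A chain is homologous, relative to a region invariant under a gradual motion, to its image
under that motion. -/
theorem exists_sweep [PseudoMetricSpace X] {S : ℕ → X → X} {A F : Set X} {ε τ : ℝ}
    (h0 : ∀ x, S 0 x = x) (hS : ∀ k x y, dist (S k x) (S k y) ≤ dist x y)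
    (hτ : ∀ k x, dist (S k x) (S (k + 1) x) ≤ τ) (hτ0 : 0 ≤ τ) (hA : ∀ k, ∀ x ∈ A, S k x ∈ A)
    (hF : ∀ k, ∀ x ∈ F ∩ A, S k x ∈ F) {c : TupleChain X} (hcA : c ∈ on (within A))
    (hcε : c ∈ on (small ε)) (hc : bdry c ∈ on (within F)) (n : ℕ) :
    ∃ w ∈ on (within A), w ∈ on (small (ε + τ)) ∧
      c + push (S n) c + bdry w ∈ on (within F) := by
  induction n with
  | zero =>
    refine ⟨0, zero_mem _, zero_mem _, ?_⟩
    have : push (S 0) c = c := by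
      rw [show S 0 = fun x => x from funext h0, push_id]
    rw [this, ZModModule.add_self, map_zero, add_zero]
    exact zero_mem _
  | succ n ih =>
    obtain ⟨w, hwA, hwε, hw⟩ := ih
    refine ⟨w + prism (S n) (S (n + 1)) c,
      add_mem hwA (prism_mem_within _ _ (hA n) (hA (n + 1)) hcA),
      add_mem hwε (prism_mem_small _ _ (A := A) ?_ ?_ ?_ hcA hcε), ?_⟩
    · intro x _ y _ h
      linarith [hS n x y]
    · intro x _ y _ h
      linarith [hS (n + 1) x y]
    · intro x _ y _ h
      linarith [hS n x y, hτ n y, dist_triangle (S n x) (S n y) (S (n + 1) y)]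
    · have h1 : prism (S n) (S (n + 1)) (bdry c) ∈ on (within F) :=
        prism_mem_within _ _ (hF n) (hF (n + 1))
          (mem_within_inter hc (bdry_mem (hered_within A) hcA))
      have h2 := add_mem hw h1
      convert h2 using 1
      rw [map_add, bdry_prism]
      apply eq_of_add_eq_zero_two
      abel_nf
      simp only [two_zsmul_zero, add_zero]

theorem cap_mem_ne (a : X → ZMod 2) {s : Set (List X)} {c : TupleChain X} (hc : c ∈ on s) :
    cap a c ∈ on {l | l ∈ s ∧ ∃ v ∈ l, a v ≠ 0} := by
  refine map_mem_of_on _ (fun l hl => ?_) hc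
  cases l with
  | nil => simp only [cap_nil, zero_mem]
  | cons v l =>
    rw [cap_tup_cons]
    by_cases h : a v = 0
    · rw [h, zero_smul]
      exact zero_mem _
    · exact Submodule.smul_mem _ _ (tup_mem_on ⟨hl, v, by simp, h⟩)

theorem add_cap_mem_eq (a : X → ZMod 2) {s : Set (List X)} {c : TupleChain X} (hc : c ∈ on s) :
    c + cap a c ∈ on {l | l ∈ s ∧ (l = [] ∨ ∃ v ∈ l, a v = 0)} := by
  refine map_mem_of_on (LinearMap.id + cap a) (fun l hl => ?_) hc
  rw [LinearMap.add_apply, LinearMap.id_apply]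
  cases l with
  | nil =>
    rw [cap_nil, add_zero]
    exact tup_mem_on ⟨hl, Or.inl rfl⟩
  | cons v l =>
    rw [cap_tup_cons]
    by_cases h : a v = 0
    · rw [h, zero_smul, add_zero]
      exact tup_mem_on ⟨hl, Or.inr ⟨v, by simp, h⟩⟩
    · have h1 : a v = 1 := Fin.eq_one_of_ne_zero (a v) h
      rw [h1, one_smul, ZModModule.add_self]
      exact zero_mem _

/-- The complement of the open cube of centre `p` and radius `ρ`. -/
def far (p : ι → ℝ) (ρ : ℝ) : Set (ι → ℝ) := {x | ∃ i, ρ ≤ |x i - p i|}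

/-- The points whose coordinates outside `L` are `ε`-close to those of `p`. -/
def slab (p : ι → ℝ) (ε : ℝ) (L : List ι) : Set (ι → ℝ) := {x | ∀ j ∉ L, |x j - p j| ≤ ε}

variable [Fintype ι]

theorem mem_far_iff {p x : ι → ℝ} {ρ : ℝ} (hρ : 0 < ρ) : x ∈ far p ρ ↔ ρ ≤ dist x p := by
  constructor
  · rintro ⟨i, hi⟩
    exact hi.trans (dist_le_pi_dist x p i)
  · intro h
    by_contra h'
    simp only [far, Set.mem_ofPred_eq, not_exists, not_le] at h'
    exact absurd ((dist_pi_lt_iff hρ).2 h') (not_lt.2 h)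

variable [DecidableEq ι]

theorem exists_push_out {p : ι → ℝ} {ε ρ δ δ' : ℝ} {L : List ι} (i : ι) (s : ℝ) (hs : s = 1 ∨ s = -1)
    (hε : ε < ρ) (hδ : δ < δ') {c : TupleChain (ι → ℝ)} (hcδ : c ∈ on (small δ))
    (hcs : c ∈ on (within (slab p ε (i :: L)))) (hci : c ∈ on (within {x | -ε ≤ s * (x i - p i)}))
    (hc : bdry c ∈ on (within (far p ρ))) :
    ∃ w ∈ on (within (slab p ε (i :: L))), w ∈ on (small δ') ∧
      c + bdry w ∈ on (within (far p ρ)) := by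
  set τ := δ' - δ with hτ
  have hτ0 : 0 < τ := by linarith
  obtain ⟨n, hn⟩ := exists_nat_ge ((ρ + ε) / τ)
  rw [div_le_iff₀ hτ0] at hn
  let S : ℕ → (ι → ℝ) → ι → ℝ := fun k x => x + Pi.single i (s * (k * τ))
  have hSi : ∀ k x, s * (S k x i - p i) = s * (x i - p i) + k * τ := by
    intro k x
    simp only [S, Pi.add_apply, Pi.single_eq_same]
    rcases hs with rfl | rfl <;> ring
  have hSj : ∀ k x j, j ≠ i → S k x j = x j := by
    intro k x j hj
    simp [S, hj]
  have hkτ : ∀ k : ℕ, 0 ≤ k * τ := fun k => by positivity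
  have habs : ∀ t : ℝ, |s * t| = |t| := by
    intro t
    rcases hs with rfl | rfl <;> simp
  have hA : ∀ k, ∀ x ∈ slab p ε (i :: L) ∩ {x | -ε ≤ s * (x i - p i)},
      S k x ∈ slab p ε (i :: L) ∩ {x | -ε ≤ s * (x i - p i)} := by
    rintro k x ⟨h1, h2⟩
    refine ⟨fun j hj => ?_, ?_⟩
    · rw [hSj k x j (by rintro rfl; simp at hj)]
      exact h1 j hj
    · simp only [Set.mem_ofPred_eq] at h2 ⊢
      rw [hSi]
      linarith [hkτ k]
  have hstep : ∀ k x, dist (S k x) (S (k + 1) x) ≤ τ := by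
    intro k x
    refine (dist_pi_le_iff hτ0.le).2 fun j => ?_
    by_cases hj : j = i
    · subst hj
      have h1 := hSi k x
      have h2 := hSi (k + 1) x
      rw [dist_comm, Real.dist_eq, ← habs]
      rw [show s * (S (k + 1) x j - S k x j) = τ by push_cast at h2; linarith, abs_of_pos hτ0]
    · rw [hSj k x j hj, hSj (k + 1) x j hj, dist_self]
      exact hτ0.le
  have hfar : ∀ k, ∀ x ∈ far p ρ ∩ (slab p ε (i :: L) ∩ {x | -ε ≤ s * (x i - p i)}),
      S k x ∈ far p ρ := by
    rintro k x ⟨⟨j, hj⟩, -, h2⟩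
    refine ⟨j, ?_⟩
    by_cases hji : j = i
    · subst hji
      simp only [Set.mem_ofPred_eq] at h2
      rw [← habs, hSi]
      rw [← habs] at hj
      rcases le_abs.1 hj with h | h
      · exact le_trans (by linarith [hkτ k]) (le_abs_self _)
      · linarith
    · rwa [hSj k x j hji]
  obtain ⟨w, hwA, hwδ, hw⟩ := exists_sweep (S := S) (ε := δ) (τ := τ) (F := far p ρ)
    (fun x => by simp [S])
    (fun k x y => by simp [S]) hstep hτ0.le hA hfar (mem_within_inter hcs hci) hcδ hc n
  rw [within_inter] at hwA
  refine ⟨w, on_mono Set.inter_subset_left hwA, by rwa [hτ, add_sub_cancel] at hwδ, ?_⟩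
  have h1 : push (S n) c ∈ on (within (far p ρ)) := by
    refine push_mem_within _ (B := far p ρ) (fun x hx => ⟨i, ?_⟩) hci
    rw [← habs, hSi]
    simp only [Set.mem_ofPred_eq] at hx
    exact le_trans (by linarith) (le_abs_self _)
  have h2 := add_mem hw h1
  convert h2 using 1
  apply eq_of_add_eq_zero_two
  abel_nf
  simp only [two_zsmul_zero, add_zero]

/-- A small chain whose boundary is far from `p` can be pushed away from `p`, provided its local
degree vanishes. -/
theorem exists_small_filling (p : ι → ℝ) {ε ρ : ℝ} (hε0 : 0 ≤ ε) (hε : ε < ρ) (L : List ι)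
    (hL : L.Nodup) {ε' : ℝ} (hε' : ε < ε')
    {z : TupleChain (ι → ℝ)} (hz : z ∈ on (small ε)) (hzs : z ∈ on (within (slab p ε L)))
    (hzb : bdry z ∈ on (within (far p ρ))) (hdeg : bdry (kaps (half p) L z) = 0) :
    ∃ w ∈ on (within (slab p ε L)), w ∈ on (small ε') ∧
      z + bdry w ∈ on (within (far p ρ)) := by
  induction L generalizing z ε' with
  | nil =>
    rw [kaps_nil] at hdeg
    refine ⟨cons p z, cons_mem_on (s := within (slab p ε [])) (t := within (slab p ε [])) (fun l hl v hv => ?_) hzs,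
      cons_mem_on (s := small ε ∩ within (slab p ε [])) (t := small ε') (fun l hl v hv w hw => ?_)
        (mem_on_inter hz hzs), ?_⟩
    · rcases List.mem_cons.1 hv with rfl | hv
      · intro j _
        simpa using hε0
      · exact hl v hv
    · have h : ∀ v ∈ l, dist v p ≤ ε := fun v hv =>
        (dist_pi_le_iff hε0).2 fun j => hl.2 v hv j (by simp)
      refine le_trans ?_ hε'.le
      rcases List.mem_cons.1 hv with hvp | hv <;> rcases List.mem_cons.1 hw with hwp | hw
      · simpa [hvp, hwp] using hε0
      · rw [hvp, dist_comm]; exact h w hw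
      · rw [hwp]; exact h v hv
      · exact hl.1 v hv w hw
    · rw [bdry_cons, hdeg, map_zero, add_zero, ZModModule.add_self]
      exact zero_mem _
  | cons i L ih =>
    have hi := (List.nodup_cons.1 hL).1
    set a := half p i with ha
    have hkap : kap a z ∈ on (within (slab p ε L)) := by
      refine kap_mem_straddle a (s := small ε ∩ within (slab p ε (i :: L))) (by intro v hv; simp at hv)
        ?_ (hered_within _) (mem_on_inter hz hzs)
      rintro l ⟨hl, hl'⟩ ⟨v, hv, w, hw, hvw⟩ u hu j hj
      by_cases hji : j = i
      · subst hji
        obtain ⟨u', hu', h⟩ : ∃ u' ∈ l, a u ≠ a u' := by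
          by_cases h : a u = a v
          · exact ⟨w, hw, h ▸ hvw⟩
          · exact ⟨v, hv, h⟩
        exact (abs_le_of_half_ne h).trans ((dist_le_pi_dist u u' j).trans (hl u hu u' hu'))
      · exact hl' u hu j (by simp [hji, hj])
    obtain ⟨w, hws, hwε, hw⟩ := ih (List.nodup_cons.1 hL).2 (ε' := (ε + ε') / 2) (by linarith)
      (z := kap a z) (kap_mem _ (hered_small _) hz) hkap
      (by rw [bdry_kap]; exact kap_mem _ (hered_within _) hzb) hdeg
    have hcap : cap a z ∈ on (within {x | -ε ≤ 1 * (x i - p i)}) := by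
      refine on_mono ?_ (cap_mem_ne a hz)
      rintro l ⟨hl, v, hv, hav⟩ u hu
      have hd := (dist_le_pi_dist v u i).trans (hl v hv u hu)
      rw [Real.dist_eq, abs_le] at hd
      have : p i ≤ v i := by
        by_contra h
        exact hav (by simp [ha, half, h])
      simp only [Set.mem_ofPred_eq]
      linarith
    have hcap' : z + cap a z ∈ on (within {x | -ε ≤ (-1) * (x i - p i)}) := by
      refine on_mono ?_ (add_cap_mem_eq a hz)
      rintro l ⟨hl, rfl | ⟨v, hv, hav⟩⟩ u hu
      · simp at hu
      · have hd := (dist_le_pi_dist v u i).trans (hl v hv u hu)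
        rw [Real.dist_eq, abs_le] at hd
        have : v i < p i := by
          by_contra h
          rw [not_lt] at h
          simp [ha, half, h] at hav
        simp only [Set.mem_ofPred_eq]
        linarith
    have hws' : w ∈ on (within (slab p ε (i :: L))) :=
      on_mono (within_mono (A := slab p ε L) (B := slab p ε (i :: L)) fun x hx j hj =>
        hx j fun h => hj (by simp [h])) hws
    have hwi : ∀ s : ℝ, s = 1 ∨ s = -1 → w ∈ on (within {x | -ε ≤ s * (x i - p i)}) := by
      intro s hs
      refine on_mono (within_mono fun x hx => ?_) hws
      have := abs_le.1 (hx i hi)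
      simp only [Set.mem_ofPred_eq]
      rcases hs with rfl | rfl <;> linarith
    have hwz : small ε ⊆ small (X := ι → ℝ) ((ε + ε') / 2) := small_mono (by linarith)
    have hb : bdry (cap a z + w) ∈ on (within (far p ρ)) := by
      rw [map_add, bdry_cap, add_right_comm]
      exact add_mem hw (cap_mem _ hzb)
    obtain ⟨u, hus, huε, hu⟩ := exists_push_out (δ' := ε') i 1 (Or.inl rfl) hε (by linarith)
      (add_mem (on_mono hwz (cap_mem a hz)) hwε) (add_mem (cap_mem a hzs) hws')
      (add_mem hcap (hwi 1 (Or.inl rfl))) hb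
    obtain ⟨u', hus', huε', hu'⟩ := exists_push_out (δ' := ε') i (-1) (Or.inr rfl) hε
      (by linarith)
      (add_mem (on_mono hwz (add_mem hz (cap_mem a hz))) hwε)
      (add_mem (add_mem hzs (cap_mem a hzs)) hws')
      (add_mem hcap' (hwi (-1) (Or.inr rfl)))
      (by rw [add_assoc, map_add]; exact add_mem hzb hb)
    refine ⟨u + u', add_mem hus hus', add_mem huε huε', ?_⟩
    have := add_mem hu hu'
    convert this using 1
    rw [map_add]
    apply eq_of_add_eq_zero_two
    abel_nf
    simp only [two_zsmul_zero, add_zero]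

end TupleChain

end

noncomputable section
namespace TupleChain

open Finsupp

variable {X Y ι : Type*}

theorem mem_on_univ (c : TupleChain X) : c ∈ on (within Set.univ) := by
  rw [show within (Set.univ : Set X) = Set.univ from
    Set.eq_univ_of_forall fun _ _ _ => Set.mem_univ _, on, supported_univ]
  exact Submodule.mem_top

theorem kap_cons (a : X → ZMod 2) (v : X) (c : TupleChain X) :
    kap a (cons v c) = a v • c + cap a c := by
  have : kap a ∘ₗ cons v = a v • LinearMap.id + cap a := hom_ext fun l => by
    simp only [LinearMap.comp_apply, cons_tup, kap_tup_cons, LinearMap.add_apply,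
      LinearMap.smul_apply, LinearMap.id_apply]
  exact LinearMap.congr_fun this c

theorem cap_prism_tup (a : Y → ZMod 2) (g h : X → Y) {s : ZMod 2} {l : List X}
    (hl : ∀ v ∈ l, a (g v) = s) : cap a (prism g h (tup l)) = s • prism g h (tup l) := by
  cases l with
  | nil => rw [prism_nil, map_zero, smul_zero]
  | cons v l => rw [prism_tup_cons, map_add, cap_tup_cons, cap_cons, hl v (by simp), smul_add]

theorem kap_prism_of_const (a : Y → ZMod 2) (g h : X → Y) {s s' : ZMod 2} {n : ℕ}
    {c : TupleChain X} (hcn : c ∈ on (len X (n + 1)))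
    (hc : c ∈ on (within {v | a (g v) = s ∧ a (h v) = s'})) :
    kap a (prism g h c) = (s + s') • push h c := by
  rw [← LinearMap.comp_apply, ← LinearMap.smul_apply]
  refine eq_of_on _ _ (fun l hl => ?_) (mem_on_inter hcn hc)
  match l, hl with
  | [], hl => simp [len] at hl
  | v :: l, hl =>
    have hv := hl.2 v (by simp)
    simp only [Set.mem_ofPred_eq] at hv
    rw [LinearMap.comp_apply, prism_tup_cons, map_add, kap_tup_cons_cons, kap_cons,
      cap_prism_tup a g h (s := s) (fun w hw => (hl.2 w (by simp [hw])).1), hv.1, hv.2,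
      ZModModule.add_self, add_zero, LinearMap.smul_apply, push_tup, List.map_cons]

theorem sum_range_add_succ {V : Type*} [AddCommGroup V] [Module (ZMod 2) V] (f : ℕ → V) (m : ℕ) :
    ∑ j ∈ Finset.range m, (f j + f (j + 1)) = f 0 + f m := by
  rw [← ZModModule.sub_eq_add (f 0), ← Finset.sum_range_sub']
  simp only [ZModModule.sub_eq_add]

variable [Fintype ι] [DecidableEq ι]

set_option maxHeartbeats 1000000 in
/-- A fine triangulation of a cube: a small chain with boundary in the boundary of the cube which
has local degree one at all interior points. -/
theorem exists_fundamental (q : ι → ℝ) {R : ℝ} (hR : 0 < R) (L : List ι) (hL : L.Nodup) {η : ℝ}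
    (hη : 0 < η) :
    ∃ G ∈ on (len (ι → ℝ) (L.length + 1)), G ∈ on (small η) ∧
      G ∈ on (within {v | ∀ j, |v j - q j| ≤ R}) ∧ G ∈ on (within {v | ∀ j ∉ L, v j = q j}) ∧
      bdry G ∈ on (within (far q R)) ∧
      ∀ x : ι → ℝ, (∀ i ∈ L, |x i - q i| < R) → bdry (kaps (half x) L G) = tup [] := by
  induction L generalizing η with
  | nil =>
    have hq : ∀ v ∈ [q], v = q := fun v hv => by simpa using hv
    have h1 : [q] ∈ len (ι → ℝ) 1 := rfl
    have h2 : [q] ∈ (small η : Set (List (ι → ℝ))) := by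
      intro v hv w hw
      rw [hq v hv, hq w hw, dist_self]
      exact hη.le
    have h3 : [q] ∈ within {v : ι → ℝ | ∀ j, |v j - q j| ≤ R} := by
      intro v hv j
      rw [hq v hv, sub_self, abs_zero]
      exact hR.le
    have h4 : [q] ∈ within {v : ι → ℝ | ∀ j ∉ ([] : List ι), v j = q j} := by
      intro v hv j _
      rw [hq v hv]
    refine ⟨tup [q], tup_mem_on h1, tup_mem_on h2, tup_mem_on h3, tup_mem_on h4, ?_, ?_⟩
    · rw [bdry_tup_cons, bdry_nil, map_zero, add_zero]
      exact tup_mem_on (s := within (far q R)) (fun v hv => by simp at hv)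
    · intro x _
      rw [kaps_nil, bdry_tup_cons, bdry_nil, map_zero, add_zero]
  | cons i L ih =>
    have hi := (List.nodup_cons.1 hL).1
    obtain ⟨G, hGn, hGη, hGR, hGq, hGb, hG⟩ := ih (List.nodup_cons.1 hL).2 (half_pos hη)
    obtain ⟨m, hm⟩ := exists_nat_ge (4 * R / η)
    have hm0 : 0 < (m : ℝ) := lt_of_lt_of_le (by positivity) hm
    rw [div_le_iff₀ hη] at hm
    set τ := 2 * R / m with hτ
    have hmτ : m * τ = 2 * R := by rw [hτ]; field_simp
    have hτ0 : 0 < τ := by positivity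
    have hτη : τ ≤ η / 2 := by
      rw [hτ, div_le_iff₀ hm0]
      linarith
    set A : Set (ι → ℝ) := {v | (∀ j, |v j - q j| ≤ R) ∧ v i = q i} with hAdef
    have hGA : G ∈ on (within A) := by
      refine on_mono ?_ (mem_on_inter hGR hGq)
      exact fun l hl v hv => ⟨hl.1 v hv, hl.2 v hv i hi⟩
    let S : ℕ → (ι → ℝ) → ι → ℝ := fun k x => x + Pi.single i (-R + k * τ)
    have hSi : ∀ k x, S k x i = x i + (-R + k * τ) := by
      intro k x
      simp [S]
    have hSj : ∀ k x j, j ≠ i → S k x j = x j := by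
      intro k x j hj
      simp [S, hj]
    have hSS : ∀ k x y, dist (S k x) (S k y) = dist x y := fun k x y => by simp [S]
    have hstep : ∀ k x, dist (S k x) (S (k + 1) x) ≤ τ := by
      intro k x
      refine (dist_pi_le_iff hτ0.le).2 fun j => ?_
      by_cases hj : j = i
      · subst hj
        rw [dist_comm, Real.dist_eq, hSi, hSi]
        push_cast
        rw [show x j + (-R + (k + 1) * τ) - (x j + (-R + k * τ)) = τ by ring, abs_of_pos hτ0]
      · rw [hSj k x j hj, hSj (k + 1) x j hj, dist_self]
        exact hτ0.le
    have hSA : ∀ k ≤ m, ∀ x ∈ A, ∀ j, |S k x j - q j| ≤ R := by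
      rintro k hk x ⟨hx, hxi⟩ j
      by_cases hj : j = i
      · subst hj
        have h1 : (k : ℝ) * τ ≤ m * τ := by gcongr
        have h2 : 0 ≤ (k : ℝ) * τ := by positivity
        rw [hSi, hxi, abs_le]
        constructor <;> linarith
      · rw [hSj k x j hj]
        exact hx j
    have hSL : ∀ k x, x ∈ {v | ∀ j ∉ L, v j = q j} → S k x ∈ {v | ∀ j ∉ i :: L, v j = q j} := by
      intro k x hx j hj
      simp only [List.mem_cons, not_or] at hj
      rw [hSj k x j hj.1]
      exact hx j hj.2
    have hfar : ∀ k, ∀ x ∈ far q R ∩ A, S k x ∈ far q R := by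
      rintro k x ⟨⟨j, hj⟩, hx⟩
      refine ⟨j, ?_⟩
      have hji : j ≠ i := by
        rintro rfl
        rw [hx.2, sub_self, abs_zero] at hj
        linarith
      rwa [hSj k x j hji]
    have hbG : bdry G ∈ on (within (far q R ∩ A)) :=
      mem_within_inter hGb (bdry_mem (hered_within _) hGA)
    refine ⟨∑ k ∈ Finset.range m, prism (S k) (S (k + 1)) G, sum_mem fun k _ => ?_,
      sum_mem fun k hk => ?_, sum_mem fun k hk => ?_, sum_mem fun k _ => ?_, ?_, ?_⟩
    · rw [List.length_cons]
      exact prism_mem_len _ _ hGn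
    · refine prism_mem_small _ _ (A := Set.univ) (ε := η / 2) (fun x _ y _ h => ?_)
        (fun x _ y _ h => ?_) (fun x _ y _ h => ?_)
        (mem_on_univ G) hGη
      · rw [hSS]; linarith
      · rw [hSS]; linarith
      · linarith [hSS k x y, hstep k y, dist_triangle (S k x) (S k y) (S (k + 1) y)]
    · have := Finset.mem_range.1 hk
      exact prism_mem_within _ _ (hSA k this.le) (hSA (k + 1) this) hGA
    · exact prism_mem_within _ _ (hSL k) (hSL (k + 1)) hGq
    · rw [map_sum]
      simp only [bdry_prism, Finset.sum_add_distrib]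
      rw [← Finset.sum_add_distrib, sum_range_add_succ (fun k => push (S k) G)]
      refine add_mem (add_mem (push_mem_within _ (B := far q R) (fun x hx => ⟨i, ?_⟩) hGA)
        (push_mem_within _ (B := far q R) (fun x hx => ⟨i, ?_⟩) hGA))
        (sum_mem fun k _ => prism_mem_within _ _ (hfar k) (hfar (k + 1)) hbG)
      · rw [hSi, hx.2]
        refine le_trans ?_ (neg_le_abs _)
        push_cast
        linarith
      · rw [hSi, hx.2]
        refine le_trans ?_ (le_abs_self _)
        linarith
    · intro x hx
      have hxi := abs_lt.1 (hx i (by simp))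
      let s : ℕ → ZMod 2 := fun k => half x i (q + Pi.single i (-R + k * τ))
      have hs : ∀ k, ∀ v ∈ A, half x i (S k v) = s k := by
        rintro k v ⟨-, hv⟩
        simp [s, half, hSi, hv]
      have h1 : ∀ k, bdry (kaps (half x) (i :: L) (prism (S k) (S (k + 1)) G)) =
          (s k + s (k + 1)) • tup [] := by
        intro k
        rw [kaps_cons, kap_prism_of_const (half x i) (S k) (S (k + 1)) (s := s k)
          (s' := s (k + 1)) hGn, map_smul, map_smul, kaps_push,
          kaps_congr (b := half x), bdry_push, hG x fun j hj => hx j (by simp [hj]), push_tup,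
          List.map_nil]
        · intro j hj
          have hji : j ≠ i := by
            rintro rfl
            exact hi hj
          ext v
          simp [half, hSj (k + 1) v j hji]
        · exact on_mono (within_mono (A := A)
            (B := {v | half x i (S k v) = s k ∧ half x i (S (k + 1) v) = s (k + 1)}) fun v hv => ⟨hs k v hv, hs (k + 1) v hv⟩) hGA
      rw [map_sum, map_sum, Finset.sum_congr rfl fun k _ => h1 k, ← Finset.sum_smul,
        sum_range_add_succ s]
      have hs0 : s 0 = 0 := by
        simp only [s, half, Pi.add_apply, Pi.single_eq_same]
        rw [if_neg]
        push_cast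
        linarith
      have hsm : s m = 1 := by
        simp only [s, half, Pi.add_apply, Pi.single_eq_same]
        rw [if_pos]
        linarith
      rw [hs0, hsm, zero_add, one_smul]

end TupleChain

end

noncomputable section
namespace TupleChain

open Finsupp

variable {X Y ι : Type*}

/-- The concatenation of two tuples, keeping track of the origin of the vertices. -/
def joinTup (σ : List X) (τ : List Y) : List (X ⊕ Y) := σ.map Sum.inl ++ τ.map Sum.inr

/-- The join of two chains. -/
def join : TupleChain X →ₗ[ZMod 2] TupleChain Y →ₗ[ZMod 2] TupleChain (X ⊕ Y) :=
  linearCombination (ZMod 2) fun σ => lmapDomain _ _ (joinTup σ)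

@[simp] theorem join_tup (σ : List X) (τ : List Y) : join (tup σ) (tup τ) = tup (joinTup σ τ) := by
  simp [join]

theorem join_ext {V : Type*} [AddCommMonoid V] [Module (ZMod 2) V]
    {S T : TupleChain X →ₗ[ZMod 2] TupleChain Y →ₗ[ZMod 2] V}
    (h : ∀ σ τ, S (tup σ) (tup τ) = T (tup σ) (tup τ)) : S = T :=
  hom_ext fun σ => hom_ext fun τ => h σ τ

theorem join_nil_cons (y : Y) (d : TupleChain Y) :
    join (tup ([] : List X)) (cons y d) = cons (Sum.inr y) (join (tup []) d) := by
  have : join (tup ([] : List X)) ∘ₗ cons y = cons (Sum.inr y) ∘ₗ join (tup []) := hom_ext fun τ => by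
    simp only [LinearMap.comp_apply, cons_tup, join_tup]
    rfl
  exact LinearMap.congr_fun this d

theorem join_cons (x : X) (c : TupleChain X) (d : TupleChain Y) :
    join (cons x c) d = cons (Sum.inl x) (join c d) := by
  have : join ∘ₗ cons x = (join (X := X) (Y := Y)).compr₂ (cons (Sum.inl x)) := join_ext fun σ τ => by
    simp only [LinearMap.comp_apply, LinearMap.compr₂_apply, cons_tup, join_tup]
    rfl
  exact LinearMap.congr_fun (LinearMap.congr_fun this c) d

theorem bdry_join (c : TupleChain X) (d : TupleChain Y) :
    bdry (join c d) = join (bdry c) d + join c (bdry d) := by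
  have : (join (X := X) (Y := Y)).compr₂ bdry = join ∘ₗ bdry + join.compl₂ bdry := join_ext fun σ τ => by
    simp only [LinearMap.comp_apply, LinearMap.compr₂_apply, LinearMap.add_apply,
      LinearMap.compl₂_apply]
    induction σ with
    | nil =>
      rw [bdry_nil, map_zero, LinearMap.zero_apply, zero_add]
      induction τ with
      | nil =>
        rw [bdry_nil, map_zero, join_tup]
        exact bdry_nil
      | cons y τ ih =>
        rw [← cons_tup, join_nil_cons, bdry_cons, ih, bdry_cons, map_add, join_nil_cons]
    | cons x σ ih =>
      rw [← cons_tup, join_cons, bdry_cons, ih, bdry_cons, map_add (cons _), map_add join,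
        LinearMap.add_apply, join_cons, join_cons, add_assoc]
  exact LinearMap.congr_fun (LinearMap.congr_fun this c) d

/-- Multiply each tuple by the value of `a` at its first left and right vertices. -/
def capJoin (a : X → Y → ZMod 2) : TupleChain (X ⊕ Y) →ₗ[ZMod 2] TupleChain (X ⊕ Y) :=
  linearCombination (ZMod 2) fun l =>
    ((l.filterMap Sum.getLeft?).head?.elim 0 fun x =>
      (l.filterMap Sum.getRight?).head?.elim 0 fun y => a x y) • tup l

theorem lefts_joinTup (σ : List X) (τ : List Y) :
    (joinTup σ τ).filterMap Sum.getLeft? = σ := by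
  simp [joinTup, List.filterMap_append, List.filterMap_map, Function.comp_def]

theorem rights_joinTup (σ : List X) (τ : List Y) :
    (joinTup σ τ).filterMap Sum.getRight? = τ := by
  simp [joinTup, List.filterMap_append, List.filterMap_map, Function.comp_def]

theorem capJoin_tup (a : X → Y → ZMod 2) (σ : List X) (τ : List Y) :
    capJoin a (tup (joinTup σ τ)) =
      (σ.head?.elim 0 fun x => τ.head?.elim 0 fun y => a x y) • tup (joinTup σ τ) := by
  rw [capJoin, linearCombination_single, one_smul, lefts_joinTup, rights_joinTup]

theorem capJoin_left (a : X → Y → ZMod 2) (c : TupleChain X) (y : Y) (τ : List Y) :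
    capJoin a (join c (tup (y :: τ))) = join (cap (a · y) c) (tup (y :: τ)) := by
  have : capJoin a ∘ₗ join.flip (tup (y :: τ)) = join.flip (tup (y :: τ)) ∘ₗ cap (a · y) :=
    hom_ext fun σ => by
      simp only [LinearMap.comp_apply, LinearMap.flip_apply, join_tup, capJoin_tup]
      cases σ with
      | nil => simp only [cap_nil, map_zero, LinearMap.zero_apply, List.head?_nil, Option.elim_none,
          zero_smul]
      | cons x σ => simp only [cap_tup_cons, map_smul, LinearMap.smul_apply, join_tup,
          List.head?_cons, Option.elim_some]
  exact LinearMap.congr_fun this c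

theorem capJoin_right (a : X → Y → ZMod 2) (x : X) (σ : List X) (d : TupleChain Y) :
    capJoin a (join (tup (x :: σ)) d) = join (tup (x :: σ)) (cap (a x) d) := by
  have : capJoin a ∘ₗ join (tup (x :: σ)) = join (tup (x :: σ)) ∘ₗ cap (a x) :=
    hom_ext fun τ => by
      simp only [LinearMap.comp_apply, join_tup, capJoin_tup]
      cases τ with
      | nil => simp only [cap_nil, map_zero, List.head?_nil, Option.elim_none, List.head?_cons,
          Option.elim_some, zero_smul]
      | cons y τ => simp only [cap_tup_cons, map_smul, join_tup, List.head?_cons, Option.elim_some]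
  exact LinearMap.congr_fun this d

theorem capJoin_nil_left (a : X → Y → ZMod 2) (d : TupleChain Y) :
    capJoin a (join (tup []) d) = 0 := by
  have : capJoin a ∘ₗ join (tup []) = 0 := hom_ext fun τ => by
    simp only [LinearMap.comp_apply, join_tup, capJoin_tup, List.head?_nil, Option.elim_none,
      zero_smul, LinearMap.zero_apply]
  exact LinearMap.congr_fun this d

theorem capJoin_nil_right (a : X → Y → ZMod 2) (c : TupleChain X) :
    capJoin a (join c (tup [])) = 0 := by
  have : capJoin a ∘ₗ join.flip (tup []) = 0 := hom_ext fun σ => by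
    simp only [LinearMap.comp_apply, LinearMap.flip_apply, join_tup, capJoin_tup, List.head?_nil,
      Option.elim_none, LinearMap.zero_apply]
    cases σ <;> simp
  exact LinearMap.congr_fun this c

/-- The cap product with the coboundary of `a` on joins. -/
def kapJoin (a : X → Y → ZMod 2) : TupleChain (X ⊕ Y) →ₗ[ZMod 2] TupleChain (X ⊕ Y) :=
  bdry ∘ₗ capJoin a + capJoin a ∘ₗ bdry

theorem kapJoin_apply (a : X → Y → ZMod 2) (c : TupleChain (X ⊕ Y)) :
    kapJoin a c = bdry (capJoin a c) + capJoin a (bdry c) := rfl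

theorem bdry_kapJoin (a : X → Y → ZMod 2) (c : TupleChain (X ⊕ Y)) :
    bdry (kapJoin a c) = kapJoin a (bdry c) := by
  simp [kapJoin_apply]

theorem kapJoin_nil_left (a : X → Y → ZMod 2) (d : TupleChain Y) :
    kapJoin a (join (tup []) d) = 0 := by
  rw [kapJoin_apply, bdry_join, bdry_nil, map_zero, LinearMap.zero_apply, zero_add,
    capJoin_nil_left, capJoin_nil_left, map_zero, add_zero]

theorem kapJoin_nil_right (a : X → Y → ZMod 2) (c : TupleChain X) :
    kapJoin a (join c (tup [])) = 0 := by
  rw [kapJoin_apply, bdry_join, bdry_nil, map_zero, add_zero,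
    capJoin_nil_right, capJoin_nil_right, map_zero, add_zero]

theorem kapJoin_cons_cons (a : X → Y → ZMod 2) (x : X) (σ : List X) (y : Y) (τ : List Y) :
    kapJoin a (join (tup (x :: σ)) (tup (y :: τ))) =
      join (kap (a · y) (tup (x :: σ))) (tup (y :: τ)) +
        join (tup (x :: σ)) (kap (a x) (tup (y :: τ))) := by
  have h : join (cap (a · y) (tup (x :: σ))) (bdry (tup (y :: τ))) =
      join (tup (x :: σ)) (bdry (cap (a x) (tup (y :: τ)))) := by
    rw [cap_tup_cons, cap_tup_cons, map_smul, map_smul, map_smul, LinearMap.smul_apply]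
  rw [kapJoin_apply, bdry_join, map_add (capJoin a), capJoin_left, capJoin_left, capJoin_right,
    bdry_join, kap_apply, kap_apply, map_add join, map_add (join _), LinearMap.add_apply, h,
    add_add_add_comm]

/-- Iterated cap products on joins. -/
def kapJoins (a : ι → X → Y → ZMod 2) :
    List ι → TupleChain (X ⊕ Y) →ₗ[ZMod 2] TupleChain (X ⊕ Y)
  | [] => LinearMap.id
  | i :: L => kapJoins a L ∘ₗ kapJoin (a i)

theorem kapJoins_nil (a : ι → X → Y → ZMod 2) (c : TupleChain (X ⊕ Y)) :
    kapJoins a [] c = c := rfl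

theorem kapJoins_cons (a : ι → X → Y → ZMod 2) (i : ι) (L : List ι) (c : TupleChain (X ⊕ Y)) :
    kapJoins a (i :: L) c = kapJoins a L (kapJoin (a i) c) := rfl

theorem bdry_kapJoins (a : ι → X → Y → ZMod 2) (L : List ι) (c : TupleChain (X ⊕ Y)) :
    bdry (kapJoins a L c) = kapJoins a L (bdry c) := by
  induction L generalizing c with
  | nil => rfl
  | cons i L ih => rw [kapJoins_cons, kapJoins_cons, ih, bdry_kapJoin]

/-- The joins of tuples satisfying a relation. -/
def joins (P : List X → List Y → Prop) : Set (List (X ⊕ Y)) := {l | ∃ σ τ, P σ τ ∧ joinTup σ τ = l}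

theorem joins_mono {P Q : List X → List Y → Prop} (h : ∀ σ τ, P σ τ → Q σ τ) :
    joins P ⊆ joins Q := by
  rintro _ ⟨σ, τ, hP, rfl⟩
  exact ⟨σ, τ, h σ τ hP, rfl⟩

theorem join_mem {P : List X → List Y → Prop} {s : Set (List X)} {t : Set (List Y)}
    (h : ∀ σ ∈ s, ∀ τ ∈ t, P σ τ) {c : TupleChain X} {d : TupleChain Y} (hc : c ∈ on s)
    (hd : d ∈ on t) : join c d ∈ on (joins P) := by
  refine map_mem_of_on (join.flip d) (fun σ hσ => ?_) hc
  refine map_mem_of_on (join (tup σ)) (fun τ hτ => ?_) hd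
  rw [join_tup]
  exact tup_mem_on ⟨σ, τ, h σ hσ τ hτ, rfl⟩

/-- The function `a` takes two distinct values on `σ × τ`. -/
def Varies (a : X → Y → ZMod 2) (σ : List X) (τ : List Y) : Prop :=
  ∃ x ∈ σ, ∃ y ∈ τ, ∃ x' ∈ σ, ∃ y' ∈ τ, a x y ≠ a x' y'

/-- The relation between a pair of tuples and those produced from it by cap products. -/
def Reduces (a : ι → X → Y → ZMod 2) (L : List ι) (σ : List X) (τ : List Y) (σ' : List X)
    (τ' : List Y) : Prop :=
  σ' ⊆ σ ∧ τ' ⊆ τ ∧ σ'.length + τ'.length + L.length = σ.length + τ.length ∧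
    σ'.length ≤ σ.length ∧ τ'.length ≤ τ.length ∧
      (σ' = [] ∨ τ' = [] ∨ ∀ i ∈ L, Varies (a i) σ τ)

theorem Varies.mono {a : X → Y → ZMod 2} {σ σ' : List X} {τ τ' : List Y} (hσ : σ' ⊆ σ)
    (hτ : τ' ⊆ τ) (h : Varies a σ' τ') : Varies a σ τ := by
  obtain ⟨x, hx, y, hy, x', hx', y', hy', h⟩ := h
  exact ⟨x, hσ hx, y, hτ hy, x', hσ hx', y', hτ hy', h⟩

theorem kapJoin_tup_mem (a : ι → X → Y → ZMod 2) (i : ι) (σ : List X) (τ : List Y) :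
    kapJoin (a i) (tup (joinTup σ τ)) ∈ on (joins (Reduces a [i] σ τ)) := by
  rw [← join_tup]
  match σ, τ with
  | [], τ => rw [kapJoin_nil_left]; exact zero_mem _
  | σ, [] => rw [kapJoin_nil_right]; exact zero_mem _
  | x :: σ, y :: τ =>
    rw [kapJoin_cons_cons]
    by_cases hv : Varies (a i) (x :: σ) (y :: τ)
    · refine add_mem (join_mem ?_ (kap_tup_mem _ _) (tup_mem_on (Set.mem_singleton _)))
        (join_mem ?_ (tup_mem_on (Set.mem_singleton _)) (kap_tup_mem _ _))
      · rintro σ' ⟨h1, h2⟩ _ rfl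
        exact ⟨h1, List.Subset.refl _, by simp only [List.length_cons, List.length_nil] at *; omega,
          by omega, le_rfl, Or.inr (Or.inr (by simpa using hv))⟩
      · rintro _ rfl τ' ⟨h1, h2⟩
        exact ⟨List.Subset.refl _, h1, by simp only [List.length_cons, List.length_nil] at *; omega,
          le_rfl, by omega, Or.inr (Or.inr (by simpa using hv))⟩
    · have hc : ∀ x' ∈ x :: σ, ∀ y' ∈ y :: τ, ∀ x'' ∈ x :: σ, ∀ y'' ∈ y :: τ,
          a i x' y' = a i x'' y'' := by
        intro x' hx' y' hy' x'' hx'' y'' hy''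
        by_contra h
        exact hv ⟨x', hx', y', hy', x'', hx'', y'', hy'', h⟩
      refine add_mem (join_mem ?_ (mem_on_inter (kap_tup_mem _ _) (kap_tup_of_const ?_))
        (tup_mem_on (Set.mem_singleton _)))
        (join_mem ?_ (tup_mem_on (Set.mem_singleton _))
        (mem_on_inter (kap_tup_mem _ _) (kap_tup_of_const ?_)))
      · rintro σ' ⟨⟨h1, h2⟩, h3⟩ _ rfl
        exact ⟨h1, List.Subset.refl _, by simp only [List.length_cons, List.length_nil] at *; omega,
          by omega, le_rfl, Or.inl h3⟩
      · intro v hv w hw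
        exact hc _ hv _ (by simp) _ hw _ (by simp)
      · rintro _ rfl τ' ⟨⟨h1, h2⟩, h3⟩
        exact ⟨List.Subset.refl _, h1, by simp only [List.length_cons, List.length_nil] at *; omega,
          le_rfl, by omega, Or.inr (Or.inl h3)⟩
      · intro v hv w hw
        exact hc _ (by simp) _ hv _ (by simp) _ hw

theorem kapJoins_tup_mem (a : ι → X → Y → ZMod 2) (L : List ι) (σ : List X) (τ : List Y) :
    kapJoins a L (tup (joinTup σ τ)) ∈ on (joins (Reduces a L σ τ)) := by
  induction L generalizing σ τ with
  | nil => exact tup_mem_on ⟨σ, τ, ⟨List.Subset.refl _, List.Subset.refl _, by simp, le_rfl, le_rfl,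
      Or.inr (Or.inr (by simp))⟩, rfl⟩
  | cons i L ih =>
    rw [kapJoins_cons]
    refine map_mem_of_on _ ?_ (kapJoin_tup_mem a i σ τ)
    rintro _ ⟨σ', τ', ⟨h1, h2, h3, h4, h5, h6⟩, rfl⟩
    refine on_mono (joins_mono ?_) (ih σ' τ')
    rintro σ'' τ'' ⟨g1, g2, g3, g4, g5, g6⟩
    simp only [List.length_cons, List.length_nil] at h3
    refine ⟨List.Subset.trans g1 h1, List.Subset.trans g2 h2, by simp only [List.length_cons]; omega, by omega, by omega, ?_⟩
    rcases h6 with rfl | rfl | h6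
    · exact Or.inl (List.subset_nil.1 g1)
    · exact Or.inr (Or.inl (List.subset_nil.1 g2))
    · rcases g6 with g6 | g6 | g6
      · exact Or.inl g6
      · exact Or.inr (Or.inl g6)
      · refine Or.inr (Or.inr fun j hj => ?_)
        rcases List.mem_cons.1 hj with rfl | hj
        · exact h6 j (by simp)
        · exact (g6 j hj).mono h1 h2

theorem kapJoins_left (a : ι → X → Y → ZMod 2) (L : List ι) (c : TupleChain X) (y : Y)
    (τ : List Y) :
    kapJoins a L (join c (tup (y :: τ))) + join (kaps (fun i x => a i x y) L c) (tup (y :: τ)) ∈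
      on (joins fun _ τ' => τ'.length < (y :: τ).length) := by
  induction L generalizing c with
  | nil =>
    rw [kapJoins_nil, kaps_nil, ZModModule.add_self]
    exact zero_mem _
  | cons i L ih =>
    rw [kapJoins_cons, kaps_cons]
    have h1 : kapJoin (a i) (join c (tup (y :: τ))) +
        join (kap (fun x => a i x y) c) (tup (y :: τ)) ∈
          on (joins fun _ τ' => τ'.length < (y :: τ).length) := by
      refine map_mem_of_on (s := Set.univ) (kapJoin (a i) ∘ₗ join.flip (tup (y :: τ)) +
        join.flip (tup (y :: τ)) ∘ₗ kap (fun x => a i x y)) (fun σ _ => ?_) (by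
          rw [on, supported_univ]; exact Submodule.mem_top)
      simp only [LinearMap.add_apply, LinearMap.comp_apply, LinearMap.flip_apply]
      cases σ with
      | nil =>
        rw [kapJoin_nil_left, kap_nil, map_zero, LinearMap.zero_apply, add_zero]
        exact zero_mem _
      | cons x σ =>
        rw [kapJoin_cons_cons, add_right_comm, ZModModule.add_self, zero_add]
        refine join_mem ?_ (tup_mem_on (Set.mem_singleton _)) (kap_tup_mem _ _)
        rintro _ _ τ' ⟨-, h⟩
        omega
    have h2 := map_mem_of_on (kapJoins a L) (t := on (joins fun _ τ' => τ'.length < (y :: τ).length))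
      (by
        rintro _ ⟨σ', τ', h, rfl⟩
        exact on_mono (joins_mono fun _ _ h' => h'.2.2.2.2.1.trans_lt h)
          (kapJoins_tup_mem a L σ' τ')) h1
    have h3 := add_mem h2 (ih (kap (fun x => a i x y) c))
    convert h3 using 1
    rw [map_add, add_assoc, ← add_assoc (kapJoins a L (join (kap _ _) _)), ZModModule.add_self,
      zero_add]

theorem kapJoins_right (a : ι → X → Y → ZMod 2) (L : List ι) (x : X) (σ : List X)
    (d : TupleChain Y) :
    kapJoins a L (join (tup (x :: σ)) d) + join (tup (x :: σ)) (kaps (fun i => a i x) L d) ∈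
      on (joins fun σ' _ => σ'.length < (x :: σ).length) := by
  induction L generalizing d with
  | nil =>
    rw [kapJoins_nil, kaps_nil, ZModModule.add_self]
    exact zero_mem _
  | cons i L ih =>
    rw [kapJoins_cons, kaps_cons]
    have h1 : kapJoin (a i) (join (tup (x :: σ)) d) +
        join (tup (x :: σ)) (kap (a i x) d) ∈
          on (joins fun σ' _ => σ'.length < (x :: σ).length) := by
      refine map_mem_of_on (s := Set.univ) (kapJoin (a i) ∘ₗ join (tup (x :: σ)) +
        join (tup (x :: σ)) ∘ₗ kap (a i x)) (fun τ _ => ?_) (by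
          rw [on, supported_univ]; exact Submodule.mem_top)
      simp only [LinearMap.add_apply, LinearMap.comp_apply]
      cases τ with
      | nil =>
        rw [kapJoin_nil_right, kap_nil, map_zero, add_zero]
        exact zero_mem _
      | cons y τ =>
        rw [kapJoin_cons_cons, add_assoc, ZModModule.add_self, add_zero]
        refine join_mem ?_ (kap_tup_mem _ _) (tup_mem_on (Set.mem_singleton _))
        rintro σ' ⟨-, h⟩ _ _
        omega
    have h2 := map_mem_of_on (kapJoins a L) (t := on (joins fun σ' _ => σ'.length < (x :: σ).length))
      (by
        rintro _ ⟨σ', τ', h, rfl⟩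
        exact on_mono (joins_mono fun _ _ h' => h'.2.2.2.1.trans_lt h)
          (kapJoins_tup_mem a L σ' τ')) h1
    have h3 := add_mem h2 (ih (kap (a i x) d))
    convert h3 using 1
    rw [map_add, add_assoc, ← add_assoc (kapJoins a L (join _ (kap _ _))), ZModModule.add_self,
      zero_add]

end TupleChain

end

noncomputable section
namespace TupleChain

open Finsupp

variable {X ι : Type*}

theorem eq_smul_of_mem_nil {c : TupleChain X} (hc : c ∈ on {[]}) : c = c [] • tup [] := by
  ext l
  by_cases hl : l = []
  · simp [hl]
  · have : c l = 0 := Finsupp.notMem_support_iff.1 fun h' => hl (hc h')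
    simp [this, hl]

theorem joinTup_injective {σ σ' τ τ' : List X} (h : joinTup σ τ = joinTup σ' τ') :
    σ = σ' ∧ τ = τ' := by
  refine ⟨?_, ?_⟩
  · rw [← lefts_joinTup σ τ, h, lefts_joinTup]
  · rw [← rights_joinTup σ τ, h, rights_joinTup]

theorem joins_inter (P Q : List X → List X → Prop) :
    joins P ∩ joins Q ⊆ joins fun σ τ => P σ τ ∧ Q σ τ := by
  rintro _ ⟨⟨σ, τ, hP, rfl⟩, ⟨σ', τ', hQ, h⟩⟩
  obtain ⟨rfl, rfl⟩ := joinTup_injective h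
  exact ⟨σ', τ', ⟨hP, hQ⟩, rfl⟩

/-- The cap product of the external product of two chains with the pulled back fundamental class
of the diagonal. -/
def cross (a : ι → X → X → ZMod 2) (L : List ι) :
    TupleChain X →ₗ[ZMod 2] TupleChain X →ₗ[ZMod 2] TupleChain X :=
  join.compr₂ (push (Sum.elim id id) ∘ₗ kapJoins a L)

theorem cross_apply (a : ι → X → X → ZMod 2) (L : List ι) (c d : TupleChain X) :
    cross a L c d = push (Sum.elim id id) (kapJoins a L (join c d)) := rfl

theorem bdry_cross (a : ι → X → X → ZMod 2) (L : List ι) (c d : TupleChain X) :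
    bdry (cross a L c d) = cross a L (bdry c) d + cross a L c (bdry d) := by
  rw [cross_apply, bdry_push, bdry_kapJoins, bdry_join, map_add, map_add, ← cross_apply,
    ← cross_apply]

theorem map_joinTup (σ τ : List X) : (joinTup σ τ).map (Sum.elim id id) = σ ++ τ := by
  simp [joinTup, List.map_map, Function.comp_def]

theorem cross_left_mem (a : ι → X → X → ZMod 2) (L : List ι) {s t R : Set (List X)}
    (hR : ∀ σ ∈ s, ∀ τ ∈ t, ∀ σ' ⊆ σ, ∀ τ' ⊆ τ, σ' ≠ [] → τ' ≠ [] →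
      (∀ i ∈ L, Varies (a i) σ τ) → σ' ++ τ' ∈ R)
    {b G : TupleChain X} (hb : b ∈ on (len X L.length ∩ s)) (hG : G ∈ on (len X (L.length + 1) ∩ t)) :
    cross a L b G + cap (fun x => kaps (fun i y => a i y x) L b []) G ∈ on R := by
  refine map_mem_of_on (cross a L b + cap _) (fun τ hτ => ?_) hG
  match τ, hτ with
  | [], hτ => simp [len] at hτ
  | y :: τ, hτ =>
    rw [LinearMap.add_apply, cap_tup_cons]
    refine map_mem_of_on ((cross a L).flip (tup (y :: τ)) +
      (lapply [] ∘ₗ kaps (fun i x => a i x y) L).smulRight (tup (y :: τ))) (fun σ hσ => ?_) hb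
    rw [LinearMap.add_apply, LinearMap.flip_apply, LinearMap.smulRight_apply]
    have h0 := eq_smul_of_mem_nil (c := kaps (fun i x => a i x y) L (tup σ)) (by
      rw [← len_zero]
      exact kaps_mem_len _ L (by rw [zero_add]; exact tup_mem_on hσ.1))
    have h1 := kapJoins_left a L (tup σ) y τ
    have h2 : kapJoins a L (join (tup σ) (tup (y :: τ))) +
        join (kaps (fun i x => a i x y) L (tup σ)) (tup (y :: τ)) ∈
          on (joins (Reduces a L σ (y :: τ))) := by
      refine add_mem (by rw [join_tup]; exact kapJoins_tup_mem a L σ (y :: τ)) ?_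
      rw [h0, map_smul, LinearMap.smul_apply, join_tup]
      refine Submodule.smul_mem _ _ (tup_mem_on ⟨[], y :: τ, ⟨by simp, List.Subset.refl _, ?_,
        by simp, le_rfl, Or.inl rfl⟩, rfl⟩)
      have h3 := hσ.1
      have h4 := hτ.1
      simp only [len, Set.mem_ofPred_eq] at h3 h4
      simp only [List.length_nil]
      omega
    have h3 : push (Sum.elim id id) (kapJoins a L (join (tup σ) (tup (y :: τ))) +
        join (kaps (fun i x => a i x y) L (tup σ)) (tup (y :: τ))) ∈ on R := by
      refine push_mem _ ?_ (on_mono (joins_inter _ _) (mem_on_inter h1 h2))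
      rintro _ ⟨σ', τ', ⟨g1, g2, g3, g4, g5, g6, g7⟩, rfl⟩
      rw [map_joinTup]
      have h3 := hσ.1
      have h4 := hτ.1
      simp only [len, Set.mem_ofPred_eq] at h3 h4
      have hσ' : σ' ≠ [] := by
        rintro rfl
        simp only [List.length_nil] at g4
        omega
      have hτ' : τ' ≠ [] := by
        rintro rfl
        simp only [List.length_nil] at g4
        omega
      refine hR σ hσ.2 _ hτ.2 σ' g2 τ' g3 hσ' hτ' ?_
      rcases g7 with h | h | h
      · exact absurd h hσ'
      · exact absurd h hτ'
      · exact h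
    convert h3 using 1
    rw [map_add, cross_apply, h0, map_smul, LinearMap.smul_apply, join_tup [], map_smul, push_tup,
      map_joinTup, List.nil_append, LinearMap.comp_apply, lapply_apply]

theorem cross_right_mem (a : ι → X → X → ZMod 2) (L : List ι) {s t R : Set (List X)}
    (hR : ∀ σ ∈ s, ∀ τ ∈ t, ∀ σ' ⊆ σ, ∀ τ' ⊆ τ, σ' ≠ [] → τ' ≠ [] →
      (∀ i ∈ L, Varies (a i) σ τ) → σ' ++ τ' ∈ R)
    {w g : TupleChain X} (hw : w ∈ on (len X (L.length + 1) ∩ s)) (hg : g ∈ on (len X L.length ∩ t)) :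
    cross a L w g + cap (fun y => kaps (fun i x => a i y x) L g []) w ∈ on R := by
  refine map_mem_of_on ((cross a L).flip g + cap _) (fun σ hσ => ?_) hw
  match σ, hσ with
  | [], hσ => simp [len] at hσ
  | x :: σ, hσ =>
    rw [LinearMap.add_apply, cap_tup_cons, LinearMap.flip_apply]
    refine map_mem_of_on (cross a L (tup (x :: σ)) +
      (lapply [] ∘ₗ kaps (fun i => a i x) L).smulRight (tup (x :: σ))) (fun τ hτ => ?_) hg
    rw [LinearMap.add_apply, LinearMap.smulRight_apply]
    have h0 := eq_smul_of_mem_nil (c := kaps (fun i => a i x) L (tup τ)) (by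
      rw [← len_zero]
      exact kaps_mem_len _ L (by rw [zero_add]; exact tup_mem_on hτ.1))
    have h1 := kapJoins_right a L x σ (tup τ)
    have h2 : kapJoins a L (join (tup (x :: σ)) (tup τ)) +
        join (tup (x :: σ)) (kaps (fun i => a i x) L (tup τ)) ∈
          on (joins (Reduces a L (x :: σ) τ)) := by
      refine add_mem (by rw [join_tup]; exact kapJoins_tup_mem a L (x :: σ) τ) ?_
      rw [h0, map_smul, join_tup]
      refine Submodule.smul_mem _ _ (tup_mem_on ⟨x :: σ, [], ⟨List.Subset.refl _, by simp, ?_,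
        le_rfl, by simp, Or.inr (Or.inl rfl)⟩, rfl⟩)
      have h3 := hσ.1
      have h4 := hτ.1
      simp only [len, Set.mem_ofPred_eq] at h3 h4
      simp only [List.length_nil]
      omega
    have h3 : push (Sum.elim id id) (kapJoins a L (join (tup (x :: σ)) (tup τ)) +
        join (tup (x :: σ)) (kaps (fun i => a i x) L (tup τ))) ∈ on R := by
      refine push_mem _ ?_ (on_mono (joins_inter _ _) (mem_on_inter h1 h2))
      rintro _ ⟨σ', τ', ⟨g1, g2, g3, g4, g5, g6, g7⟩, rfl⟩
      rw [map_joinTup]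
      have h3 := hσ.1
      have h4 := hτ.1
      simp only [len, Set.mem_ofPred_eq] at h3 h4
      have hσ' : σ' ≠ [] := by
        rintro rfl
        simp only [List.length_nil] at g4
        omega
      have hτ' : τ' ≠ [] := by
        rintro rfl
        simp only [List.length_nil] at g4
        omega
      refine hR _ hσ.2 τ hτ.2 σ' g2 τ' g3 hσ' hτ' ?_
      rcases g7 with h | h | h
      · exact absurd h hσ'
      · exact absurd h hτ'
      · exact h
    convert h3 using 1
    rw [map_add, cross_apply, h0, map_smul, join_tup _ [], map_smul, push_tup,
      map_joinTup, List.append_nil, LinearMap.comp_apply, lapply_apply]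

/-- The closed `κ`-neighbourhood of a set. -/
def thick [PseudoMetricSpace X] (κ : ℝ) (A : Set X) : Set X := {v | ∃ a ∈ A, dist v a ≤ κ}

variable [Fintype ι]

theorem dist_le_of_varies {L : List ι} (hL : ∀ i, i ∈ L) {ε η : ℝ} (hε : 0 ≤ ε) (hη : 0 ≤ η)
    {σ τ : List (ι → ℝ)} (hσ : σ ∈ small ε) (hτ : τ ∈ small η)
    (h : ∀ i ∈ L, Varies (fun y x => half y i x) σ τ) : ∀ y ∈ σ, ∀ x ∈ τ, dist y x ≤ ε + η := by
  intro y hy x hx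
  refine (dist_pi_le_iff (by linarith)).2 fun i => ?_
  have key : ∀ y₁ ∈ σ, ∀ x₁ ∈ τ, ∀ y₂ ∈ σ, ∀ x₂ ∈ τ, y₁ i ≤ x₁ i → ¬ y₂ i ≤ x₂ i →
      dist (y i) (x i) ≤ ε + η := by
    intro y₁ hy₁ x₁ hx₁ y₂ hy₂ x₂ hx₂ h1 h2
    have d1 := abs_le.1 ((dist_le_pi_dist y y₁ i).trans (hσ y hy y₁ hy₁))
    have d2 := abs_le.1 ((dist_le_pi_dist y y₂ i).trans (hσ y hy y₂ hy₂))
    have d3 := abs_le.1 ((dist_le_pi_dist x x₁ i).trans (hτ x hx x₁ hx₁))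
    have d4 := abs_le.1 ((dist_le_pi_dist x x₂ i).trans (hτ x hx x₂ hx₂))
    rw [Real.dist_eq, abs_le]
    constructor <;> linarith
  obtain ⟨y₁, hy₁, x₁, hx₁, y₂, hy₂, x₂, hx₂, hne⟩ := h i (hL i)
  by_cases h1 : y₁ i ≤ x₁ i <;> by_cases h2 : y₂ i ≤ x₂ i
  · simp [half, h1, h2] at hne
  · exact key _ hy₁ _ hx₁ _ hy₂ _ hx₂ h1 h2
  · exact key _ hy₂ _ hx₂ _ hy₁ _ hx₁ h2 h1
  · simp [half, h1, h2] at hne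

/-- A chain is, up to boundaries, the sum of its local degrees times the fundamental chain of a
cube and of terms near its own boundary or away from the centre of the cube. -/
theorem exists_localization {L : List ι} (hL : ∀ i, i ∈ L) {ε η : ℝ} (hε : 0 ≤ ε) (hη : 0 ≤ η)
    {w G P Q : TupleChain (ι → ℝ)} (hw : w ∈ on (len _ (L.length + 1))) (hwε : w ∈ on (small ε))
    (hG : G ∈ on (len _ (L.length + 1))) (hGη : G ∈ on (small η)) {A B F : Set (ι → ℝ)}
    (hP : P ∈ on (len _ L.length)) (hPε : P ∈ on (small ε)) (hPA : P ∈ on (within A))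
    (hQ : Q ∈ on (len _ L.length)) (hQε : Q ∈ on (small ε)) (hQB : Q ∈ on (within B))
    (hwPQ : bdry w = P + Q) (hGF : bdry G ∈ on (within F)) :
    ∃ N ∈ on (within (thick (ε + η) A)), N ∈ on (small (ε + η)) ∧ ∃ N' ∈ on (within (thick (ε + η) (B ∪ F))),
      bdry (cap (fun x => deg (fun i y => half y i x) L w) G +
        cap (fun y => deg (half y) L G) w + N + N') = 0 := by
  set a : ι → (ι → ℝ) → (ι → ℝ) → ZMod 2 := fun i y x => half y i x with ha
  set κ := ε + η with hκ
  have hR : ∀ A : Set (ι → ℝ), ∀ σ ∈ small ε ∩ within A, ∀ τ ∈ (small η : Set (List (ι → ℝ))), ∀ σ' ⊆ σ,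
      ∀ τ' ⊆ τ, σ' ≠ [] → τ' ≠ [] → (∀ i ∈ L, Varies (a i) σ τ) →
        σ' ++ τ' ∈ within (thick κ A) ∩ small κ := by
    intro A σ hσ τ hτ σ' hσ' τ' hτ' h1 h2 h
    have hd := dist_le_of_varies hL hε hη hσ.1 hτ h
    refine ⟨fun v hv => ?_, fun v hv w hw => ?_⟩
    · obtain ⟨y, hy⟩ := List.exists_mem_of_ne_nil _ h1
      rcases List.mem_append.1 hv with hv | hv
      · exact ⟨v, hσ.2 v (hσ' hv), by rw [dist_self]; linarith⟩
      · refine ⟨y, hσ.2 y (hσ' hy), ?_⟩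
        rw [dist_comm]
        exact hd y (hσ' hy) v (hτ' hv)
    · rcases List.mem_append.1 hv with hv | hv <;> rcases List.mem_append.1 hw with hw | hw
      · have := hσ.1 v (hσ' hv) w (hσ' hw)
        linarith
      · exact hd v (hσ' hv) w (hτ' hw)
      · rw [dist_comm]
        exact hd w (hσ' hw) v (hτ' hv)
      · have := hτ v (hτ' hv) w (hτ' hw)
        linarith
  have hR' : ∀ σ ∈ (small ε : Set (List (ι → ℝ))), ∀ τ ∈ small η ∩ within F, ∀ σ' ⊆ σ,
      ∀ τ' ⊆ τ, σ' ≠ [] → τ' ≠ [] → (∀ i ∈ L, Varies (a i) σ τ) → σ' ++ τ' ∈ within (thick κ F) := by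
    intro σ hσ τ hτ σ' hσ' τ' hτ' h1 h2 h v hv
    obtain ⟨y, hy⟩ := List.exists_mem_of_ne_nil _ h2
    rcases List.mem_append.1 hv with hv | hv
    · exact ⟨y, hτ.2 y (hτ' hy), dist_le_of_varies hL hε hη hσ hτ.1 h v (hσ' hv) y (hτ' hy)⟩
    · exact ⟨v, hτ.2 v (hτ' hv), by rw [dist_self]; linarith⟩
  have hb := bdry_mem_len hw
  have c1 := cross_left_mem a L (hR A) (mem_on_inter hP (mem_on_inter hPε hPA)) (mem_on_inter hG hGη)
  have c2 := cross_left_mem a L (hR B) (mem_on_inter hQ (mem_on_inter hQε hQB)) (mem_on_inter hG hGη)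
  have c3 := cross_right_mem a L hR' (mem_on_inter hw hwε)
    (mem_on_inter (bdry_mem_len hG) (mem_on_inter (bdry_mem (hered_small _) hGη) hGF))
  refine ⟨_, on_mono Set.inter_subset_left c1, on_mono Set.inter_subset_right c1, _,
    add_mem (on_mono (Set.inter_subset_left.trans (within_mono ?_)) c2) (on_mono (within_mono ?_) c3), ?_⟩
  · rintro v ⟨u, hu, h⟩
    exact ⟨u, Or.inl hu, h⟩
  · rintro v ⟨u, hu, h⟩
    exact ⟨u, Or.inr hu, h⟩
  · have e1 : cap (fun x => deg (fun i y => a i y x) L w) G =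
        cap (fun x => kaps (fun i y => a i y x) L P []) G +
          cap (fun x => kaps (fun i y => a i y x) L Q []) G := by
      rw [← cap_add_apply]
      congr 2
      ext x
      rw [deg_apply, bdry_kaps, hwPQ, map_add, Finsupp.add_apply, Pi.add_apply]
    have e2 : cap (fun y => deg (half y) L G) w =
        cap (fun y => kaps (fun i x => a i y x) L (bdry G) []) w := by
      congr 2
      ext y
      rw [deg_apply, bdry_kaps]
    have e3 : bdry (cross a L P G + cross a L Q G + cross a L w (bdry G)) = 0 := by
      rw [← LinearMap.add_apply, ← map_add, ← hwPQ, ← bdry_cross, bdry_bdry]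
    rw [← e3]
    congr 1
    rw [e1, e2]
    apply eq_of_add_eq_zero_two
    abel_nf
    simp only [two_zsmul_zero, add_zero]

end TupleChain

end

noncomputable section
namespace TupleChain

open Finsupp

variable {X ι κ : Type*}

/-- The homogeneous part of a chain formed by the tuples of length `n`. -/
def grade (n : ℕ) : TupleChain X →ₗ[ZMod 2] TupleChain X :=
  linearCombination (ZMod 2) fun l => if l.length = n then tup l else 0

theorem grade_tup (n : ℕ) (l : List X) : grade n (tup l) = if l.length = n then tup l else 0 := by
  simp [grade]

theorem grade_zero_cons (v : X) (c : TupleChain X) : grade 0 (cons v c) = 0 := by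
  have : grade 0 ∘ₗ cons v = (0 : TupleChain X →ₗ[ZMod 2] _) := hom_ext fun l => by
    simp [grade_tup]
  exact LinearMap.congr_fun this c

theorem grade_succ_cons (n : ℕ) (v : X) (c : TupleChain X) :
    grade (n + 1) (cons v c) = cons v (grade n c) := by
  have : grade (n + 1) ∘ₗ cons v = cons v ∘ₗ grade n := hom_ext fun l => by
    by_cases h : l.length = n <;> simp [grade_tup, h]
  exact LinearMap.congr_fun this c

theorem bdry_grade (n : ℕ) (c : TupleChain X) : bdry (grade (n + 1) c) = grade n (bdry c) := by
  have : bdry ∘ₗ grade (n + 1) = grade n ∘ₗ (bdry : TupleChain X →ₗ[ZMod 2] _) := hom_ext fun l => by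
    rw [LinearMap.comp_apply, LinearMap.comp_apply]
    induction l generalizing n with
    | nil => simp [grade_tup]
    | cons v l ih =>
      rw [← cons_tup, grade_succ_cons, bdry_cons, bdry_cons, map_add]
      cases n with
      | zero =>
        rw [grade_zero_cons, grade_tup]
        split_ifs with h
        · rw [List.length_eq_zero_iff.1 h, bdry_nil, map_zero]
        · rw [map_zero, map_zero]
      | succ n => rw [grade_succ_cons, ih]
  exact LinearMap.congr_fun this c

theorem grade_mem (n : ℕ) {s : Set (List X)} {c : TupleChain X} (hc : c ∈ on s) :
    grade n c ∈ on s :=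
  map_mem_of_on _ (fun l hl => by
    rw [grade_tup]
    split_ifs
    · exact tup_mem_on hl
    · exact zero_mem _) hc

theorem grade_mem_len (n : ℕ) (c : TupleChain X) : grade n c ∈ on (len X n) :=
  map_mem_of_on (s := within Set.univ) _ (fun l _ => by
    rw [grade_tup]
    split_ifs with h
    · exact tup_mem_on h
    · exact zero_mem _) (mem_on_univ c)

theorem grade_of_len {n : ℕ} {c : TupleChain X} (hc : c ∈ on (len X n)) : grade n c = c :=
  eq_of_on (grade n) LinearMap.id (fun l hl => by
    rw [grade_tup, if_pos (show l.length = n from hl), LinearMap.id_apply]) hc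

/-- The indicator `a i` of a half space bounded by the `i`-th coordinate hyperplane. -/
def Cuts (a : ι → (ι → ℝ) → ZMod 2) : Prop :=
  ∀ i v w, a i v ≠ a i w → |v i| ≤ |v i - w i|

theorem cuts_half : Cuts (half (0 : ι → ℝ)) := fun i v w h => by
  simpa using abs_le_of_half_ne h

theorem cuts_half_flip : Cuts fun i (v : ι → ℝ) => half v i 0 := by
  intro i v w h
  simp only [half, Pi.zero_apply] at h
  by_cases h1 : v i ≤ 0 <;> by_cases h2 : w i ≤ 0
  · simp [h1, h2] at h
  · rw [abs_of_nonpos h1, abs_of_nonpos (by linarith)]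
    linarith
  · rw [abs_of_pos (not_le.1 h1), abs_of_pos (by linarith)]
    linarith
  · simp [h1, h2] at h

theorem deg_half_eq (L : List ι) (x : ι → ℝ) (c : TupleChain (ι → ℝ)) :
    deg (half x) L c = deg (half 0) L (push (fun v => v - x) c) := by
  rw [deg_push]
  have : half x = fun i => half 0 i ∘ fun v => v - x := by
    ext i v
    simp [half]
  rw [this]

theorem deg_half_flip_eq (L : List ι) (x : ι → ℝ) (c : TupleChain (ι → ℝ)) :
    deg (fun i v => half v i x) L c =
      deg (fun i v => half v i 0) L (push (fun v => v - x) c) := by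
  rw [deg_push]
  have : (fun i v => half v i x) = fun i => (fun v => half v i (0 : ι → ℝ)) ∘ fun v => v - x := by
    ext i v
    simp [half]
  rw [this]

theorem far_mono {p : ι → ℝ} {ρ ρ' : ℝ} (h : ρ' ≤ ρ) : far p ρ ⊆ far p ρ' :=
  fun _ ⟨i, hi⟩ => ⟨i, h.trans hi⟩

theorem sub_mem_far {x v : ι → ℝ} {ρ : ℝ} : v - x ∈ far 0 ρ ↔ v ∈ far x ρ := by
  simp [far]

variable [Fintype ι] [Fintype κ]

theorem mem_far_of_dist {p x y : ι → ℝ} {ρ δ : ℝ} (hx : x ∈ far p ρ) (h : dist x y ≤ δ) :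
    y ∈ far p (ρ - δ) := by
  obtain ⟨i, hi⟩ := hx
  refine ⟨i, ?_⟩
  have h1 := (dist_le_pi_dist x y i).trans h
  rw [Real.dist_eq] at h1
  have h2 := abs_sub_abs_le_abs_sub (x i - p i) (y i - p i)
  rw [sub_sub_sub_cancel_right] at h2
  linarith

theorem mem_far_of_center {p q x : ι → ℝ} {ρ δ : ℝ} (hx : x ∈ far p ρ) (h : dist p q ≤ δ) :
    x ∈ far q (ρ - δ) := by
  obtain ⟨i, hi⟩ := hx
  refine ⟨i, ?_⟩
  have h1 := (dist_le_pi_dist p q i).trans h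
  rw [Real.dist_eq, abs_sub_comm] at h1
  have h2 := abs_sub_abs_le_abs_sub (x i - p i) (x i - q i)
  rw [sub_sub_sub_cancel_left] at h2
  linarith

theorem deg_of_far {a : ι → (ι → ℝ) → ZMod 2} (ha : Cuts a) {L : List ι} (hL : ∀ i, i ∈ L)
    {ε ρ : ℝ} (hε : ε < ρ) {c : TupleChain (ι → ℝ)} (hc : c ∈ on (small ε))
    (hcf : c ∈ on {l | l = [] ∨ ∃ v ∈ l, v ∈ far 0 ρ}) : deg a L c = 0 := by
  have := map_mem_of_on (t := ⊥) (deg a L) (fun l hl => ?_) (mem_on_inter hc hcf)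
  · simpa using this
  · rw [Submodule.mem_bot]
    rcases hl.2 with rfl | ⟨v, hv, i, hi⟩
    · rw [deg_apply, bdry_of_mem_nil (kaps_mem_nil a L (tup_mem_on rfl)), Finsupp.zero_apply]
    · refine deg_of_const a L (tup_mem_on ⟨i, hL i, ?_⟩)
      have key : ∀ w ∈ l, a i v = a i w := by
        intro w hw
        by_contra h
        have h1 := ha i v w h
        have h2 := (dist_le_pi_dist v w i).trans (hl.1 v hv w hw)
        rw [Real.dist_eq] at h2
        simp only [Pi.zero_apply, sub_zero] at hi
        linarith
      intro w hw w' hw'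
      rw [← key w hw, ← key w' hw']

theorem within_subset_exists (A : Set X) : within A ⊆ {l | l = [] ∨ ∃ v ∈ l, v ∈ A} := by
  intro l hl
  match l, hl with
  | [], _ => exact Or.inl rfl
  | v :: l, hl => exact Or.inr ⟨v, by simp, hl v (by simp)⟩

/-- The degree at a point does not change while the point stays away from the boundary. -/
theorem deg_push_sub_eq {a : ι → (ι → ℝ) → ZMod 2} (ha : Cuts a) {L : List ι} (hL : ∀ i, i ∈ L)
    {ε ρ : ℝ} {x y : ι → ℝ} (hε : ε + dist x y < ρ) {c : TupleChain (ι → ℝ)}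
    (hc : c ∈ on (small ε)) (hb : bdry c ∈ on (within (far x ρ ∩ far y ρ))) :
    deg a L (push (fun v => v - x) c) = deg a L (push (fun v => v - y) c) := by
  have h := deg_bdry a L (prism (fun v => v - x) (fun v => v - y) c)
  rw [bdry_prism, map_add, map_add] at h
  have h1 : prism (fun v => v - x) (fun v => v - y) (bdry c) ∈ on (within (far 0 ρ)) :=
    prism_mem_within _ _ (fun v hv => sub_mem_far.2 hv.1) (fun v hv => sub_mem_far.2 hv.2) hb
  have h2 : prism (fun v => v - x) (fun v => v - y) (bdry c) ∈ on (small (ε + dist x y)) := by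
    refine prism_mem_small _ _ (A := Set.univ) ?_ ?_ ?_ (mem_on_univ _)
      (bdry_mem (hered_small _) hc)
    · intro v _ w _ h
      rw [dist_sub_right]
      linarith [dist_nonneg (x := x) (y := y)]
    · intro v _ w _ h
      rw [dist_sub_right]
      linarith [dist_nonneg (x := x) (y := y)]
    · intro v _ w _ h
      exact (dist_sub_sub_le v x w y).trans (by linarith)
  rw [deg_of_far ha hL hε h2 (on_mono (within_subset_exists _) h1), add_zero] at h
  exact eq_of_add_eq_zero_two h

/-- A chain of the right dimension bounds, up to terms away from a cube. -/
theorem exists_len_filling [DecidableEq ι] (p : ι → ℝ) {ε ε' ρ : ℝ} (hε0 : 0 ≤ ε) (hε : ε < ρ)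
    {L : List ι} (hLn : L.Nodup) (hL : ∀ i, i ∈ L) (hε' : ε < ε') {n : ℕ}
    {z : TupleChain (ι → ℝ)} (hz : z ∈ on (small ε)) (hzn : z ∈ on (len _ n))
    (hzb : bdry z ∈ on (within (far p ρ))) (hdeg : bdry (kaps (half p) L z) = 0) :
    ∃ w ∈ on (len _ (n + 1)), w ∈ on (small ε') ∧ z + bdry w ∈ on (within (far p ρ)) := by
  obtain ⟨w, -, hw, hw'⟩ := exists_small_filling p hε0 hε L hLn hε' hz
    (on_mono (fun l _ v _ j hj => absurd (hL j) hj) hz) hzb hdeg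
  refine ⟨grade (n + 1) w, grade_mem_len _ _, grade_mem _ hw, ?_⟩
  have := grade_mem n hw'
  rwa [map_add, grade_of_len hzn, ← bdry_grade] at this

end TupleChain

end

noncomputable section
namespace TupleChain

open Finsupp Metric

variable {X ι κ : Type*}

/-- The retraction of the plane onto the standard square. -/
def clamp (y : κ → ℝ) : κ → ℝ := fun i => max (-1) (min 1 (y i))

theorem clamp_of_le {y : κ → ℝ} (h : ∀ i, |y i| ≤ 1) : clamp y = y := by
  ext i
  have := abs_le.1 (h i)
  rw [clamp, min_eq_right this.2, max_eq_right this.1]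

theorem abs_clamp_le (y : κ → ℝ) (i : κ) : |clamp y i| ≤ 1 :=
  abs_le.2 ⟨le_max_left _ _, max_le (by norm_num) (min_le_left _ _)⟩

theorem continuous_clamp : Continuous (clamp : (κ → ℝ) → κ → ℝ) := by
  unfold clamp
  fun_prop

theorem clamp_sub_mem_far {y u : κ → ℝ} {ρ : ℝ} (hu : ∀ i, ρ ≤ 1 - |u i|) (h : y - u ∈ far 0 ρ) :
    clamp y - u ∈ far 0 ρ := by
  obtain ⟨i, hi⟩ := h
  refine ⟨i, ?_⟩
  have h1 := hu i
  simp only [Pi.sub_apply, Pi.zero_apply, sub_zero, clamp] at hi ⊢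
  rcases le_total (y i) 1 with h2 | h2
  · rcases le_total (-1) (y i) with h3 | h3
    · rwa [min_eq_right h2, max_eq_right h3]
    · rw [min_eq_right h2, max_eq_left h3]
      have := neg_abs_le (u i)
      exact le_trans (by linarith) (neg_le_abs _)
  · rw [min_eq_left h2, max_eq_right (by norm_num)]
    have := le_abs_self (u i)
    exact le_trans (by linarith) (le_abs_self _)

theorem clamp_mem_closedBall [Fintype κ] (y : κ → ℝ) : clamp y ∈ closedBall (0 : κ → ℝ) 1 := by
  rw [mem_closedBall_zero_iff]
  exact (pi_norm_le_iff_of_nonneg zero_le_one).2 fun i => by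
    rw [Real.norm_eq_abs]
    exact abs_clamp_le y i

theorem exists_modulus {Y Z : Type*} [PseudoMetricSpace Y] [PseudoMetricSpace Z] {f : Y → Z}
    {K : Set Y} (hK : IsCompact K) (hf : Continuous f) {ε : ℝ} (hε : 0 < ε) :
    ∃ δ > 0, ∀ y ∈ K, ∀ y' ∈ K, dist y y' ≤ δ → dist (f y) (f y') ≤ ε := by
  have h := hK.uniformContinuousOn_of_continuous hf.continuousOn
  rw [Metric.uniformContinuousOn_iff_le] at h
  exact h ε hε

/-- An embedded square together with a retraction onto it. -/
structure Sheet (ι κ : Type*) where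
  φ : (κ → ℝ) → ι → ℝ
  r : (ι → ℝ) → κ → ℝ
  continuous_φ : Continuous φ
  continuous_r : Continuous r
  r_φ : ∀ y, r (φ y) = clamp y
  φ_clamp : ∀ y, φ (clamp y) = φ y

namespace Sheet

variable (S : Sheet ι κ)

/-- The embedded square. -/
def carrier : Set (ι → ℝ) := Set.range S.φ

theorem φ_r {d : ι → ℝ} (hd : d ∈ S.carrier) : S.φ (S.r d) = d := by
  obtain ⟨y, rfl⟩ := hd
  rw [S.r_φ, S.φ_clamp]

variable [Fintype κ]

theorem carrier_eq : S.carrier = S.φ '' closedBall 0 1 := by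
  apply Set.Subset.antisymm
  · rintro _ ⟨y, rfl⟩
    exact ⟨clamp y, clamp_mem_closedBall y, S.φ_clamp y⟩
  · rintro _ ⟨y, -, rfl⟩
    exact ⟨y, rfl⟩

theorem isCompact_carrier : IsCompact S.carrier := by
  rw [carrier_eq]
  exact (isCompact_closedBall _ _).image S.continuous_φ

theorem isClosed_carrier : IsClosed S.carrier := S.isCompact_carrier.isClosed

end Sheet

variable [Fintype ι] [Fintype κ]

/-- A fundamental chain of the cube of centre `q` and radius `R` with small simplices. -/
structure IsFundamental (L : List ι) (q : ι → ℝ) (R η : ℝ) (G : TupleChain (ι → ℝ)) : Prop where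
  mem_len : G ∈ on (len _ (L.length + 1))
  mem_small : G ∈ on (small η)
  mem_within : G ∈ on (within (closedBall q R))
  bdry_mem : bdry G ∈ on (within (far q R))
  deg_eq : ∀ x ∈ ball q R, deg (half x) L G = 1

theorem exists_isFundamental [DecidableEq ι] {L : List ι} (hLn : L.Nodup) (q : ι → ℝ)
    {R η : ℝ} (hR : 0 < R) (hη : 0 < η) : ∃ G, IsFundamental L q R η G := by
  obtain ⟨G, h1, h2, h3, -, h5, h6⟩ := exists_fundamental q hR L hLn hη
  refine ⟨G, h1, h2, on_mono (within_mono fun v hv => ?_) h3, h5, fun x hx => ?_⟩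
  · exact (dist_pi_le_iff hR.le).2 hv
  · rw [deg_apply, h6 x fun i _ => (dist_le_pi_dist x q i).trans_lt hx]
    simp

namespace Sheet

variable (S : Sheet ι κ)

theorem exists_modulus_φ {ε : ℝ} (hε : 0 < ε) :
    ∃ δ > 0, ∀ y y' : κ → ℝ, dist y y' ≤ δ → dist (S.φ y) (S.φ y') ≤ ε := by
  obtain ⟨δ, hδ, h⟩ := exists_modulus (isCompact_closedBall (0 : κ → ℝ) 1) S.continuous_φ hε
  refine ⟨δ, hδ, fun y y' hy => ?_⟩
  rw [← S.φ_clamp y, ← S.φ_clamp y']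
  refine h _ (clamp_mem_closedBall y) _ (clamp_mem_closedBall y') (le_trans ?_ hy)
  refine (dist_pi_le_iff dist_nonneg).2 fun i => le_trans ?_ (dist_le_pi_dist y y' i)
  rw [Real.dist_eq, Real.dist_eq, clamp, clamp]
  have h1 := abs_max_sub_max_le_max (-1) (min 1 (y i)) (-1) (min 1 (y' i))
  have h2 := abs_min_sub_min_le_max 1 (y i) 1 (y' i)
  rw [sub_self, abs_zero] at h1 h2
  exact h1.trans (max_le (abs_nonneg _) (h2.trans (max_le (abs_nonneg _) le_rfl)))

/-- Near the sheet but away from one of its points, the retraction is away from its parameter. -/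
theorem exists_gap {K : Set (ι → ℝ)} (hK : IsCompact K) (u : κ → ℝ) {ρ b : ℝ} (hρ : 0 < ρ)
    (hb : 0 < b) : ∃ c > 0, c ≤ b ∧
      ∀ v ∈ K, v ∈ far (S.φ u) ρ → v ∈ thick c S.carrier → S.r v - u ∈ far 0 c := by
  set C := K ∩ {v | ρ ≤ dist v (S.φ u)} with hC
  have hCc : IsCompact C := hK.inter_right (isClosed_le continuous_const (by fun_prop))
  have hne : S.carrier.Nonempty := ⟨_, u, rfl⟩
  set h : (ι → ℝ) → ℝ := fun v => max (infDist v S.carrier) (dist (S.r v) u) with hh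
  have hcont : Continuous h :=
    (continuous_infDist_pt _).max (S.continuous_r.dist continuous_const)
  have hpos : ∀ v ∈ C, 0 < h v := by
    rintro v ⟨-, hv⟩
    by_contra h0
    rw [hh, not_lt] at h0
    have h1 := le_antisymm ((le_max_left _ _).trans h0) infDist_nonneg
    have h2 := le_antisymm ((le_max_right _ _).trans h0) dist_nonneg
    have h3 : v ∈ S.carrier := (S.isClosed_carrier.mem_iff_infDist_zero hne).2 h1
    rw [dist_eq_zero] at h2
    rw [Set.mem_ofPred_eq, ← h2, S.φ_r h3, dist_self] at hv
    linarith
  obtain ⟨c, hc, hcC⟩ : ∃ c > 0, ∀ v ∈ C, c ≤ h v := by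
    rcases C.eq_empty_or_nonempty with hCe | hCn
    · exact ⟨1, one_pos, fun v hv => by rw [hCe] at hv; exact absurd hv (Set.notMem_empty v)⟩
    · obtain ⟨v, hv, hmin⟩ := hCc.exists_isMinOn hCn hcont.continuousOn
      exact ⟨h v, hpos v hv, fun w hw => hmin hw⟩
  refine ⟨min (c / 2) b, lt_min (by linarith) hb, min_le_right _ _, fun v hvK hv hvD => ?_⟩
  have h1 := hcC v ⟨hvK, (mem_far_iff hρ).1 hv⟩
  obtain ⟨d, hd, hvd⟩ := hvD
  have h2 : infDist v S.carrier < c :=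
    ((infDist_le_dist_of_mem hd).trans hvd).trans_lt ((min_le_left _ _).trans_lt (by linarith))
  have h3 : c ≤ dist (S.r v) u := (le_max_iff.1 h1).resolve_left (not_le.2 h2)
  rw [sub_mem_far]
  exact (mem_far_iff (lt_min (by linarith) hb)).2 ((min_le_left _ _).trans (by linarith))

end Sheet

end TupleChain

end

noncomputable section
namespace TupleChain

open Finsupp Metric Topology

variable {X ι κ : Type*} [Fintype ι] [Fintype κ]

theorem thick_mono {Y : Type*} [PseudoMetricSpace Y] {A : Set Y} {ε δ : ℝ} (h : ε ≤ δ) : thick ε A ⊆ thick δ A :=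
  fun _ ⟨a, ha, hv⟩ => ⟨a, ha, hv.trans h⟩

/-- A function is locally constant on `V` off `D`. -/
def LocConstOff {Y : Type*} [TopologicalSpace Y] (f : Y → ZMod 2) (V D : Set Y) : Prop :=
  ∀ x ∈ V \ D, ∀ᶠ y in 𝓝 x, f y = f x

theorem LocConstOff.kap_mem {f : (ι → ℝ) → ZMod 2} {V D C : Set (ι → ℝ)} (hf : LocConstOff f V D)
    (hC : Convex ℝ C) (hCV : C ⊆ V) {η : ℝ} {c : TupleChain (ι → ℝ)} (hc : c ∈ on (small η))
    (hcC : c ∈ on (within C)) : kap f c ∈ on (within (thick (2 * η) D)) := by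
  refine kap_mem_straddle f (s := small η ∩ within C) (fun v hv => by simp at hv) ?_
    (hered_within _) (mem_on_inter hc hcC)
  rintro l ⟨hl, hlC⟩ ⟨v, hv, w, hw, hne⟩ u hu
  obtain ⟨d, hd, hdD⟩ : ∃ d ∈ segment ℝ v w, d ∈ D := by
    by_contra h
    push Not at h
    let _ : TopologicalSpace (ZMod 2) := ⊥
    have : DiscreteTopology (ZMod 2) := ⟨rfl⟩
    refine hne ((convex_segment v w).isPreconnected.constant (f := f) (fun x hx => ?_)
      (left_mem_segment ℝ v w) (right_mem_segment ℝ v w))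
    have h1 := hf x ⟨hCV (hC.segment_subset (hlC v hv) (hlC w hw) hx), h x hx⟩
    exact (continuousAt_const.congr (h1.mono fun y hy => hy.symm)).continuousWithinAt
  refine ⟨d, hdD, ?_⟩
  have h1 : d ∈ closedBall v η := (convex_closedBall v η).segment_subset
    (mem_closedBall_self (dist_nonneg.trans (hl v hv w hw)))
    (by rw [mem_closedBall]; exact hl w hw v hv) hd
  rw [mem_closedBall, dist_comm] at h1
  linarith [dist_triangle u v d, hl u hu v hv]

theorem deg_half_of_far {L : List ι} (hL : ∀ i, i ∈ L) {ε ρ : ℝ} (hε : ε < ρ) {x : ι → ℝ}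
    {c : TupleChain (ι → ℝ)} (hc : c ∈ on (small ε))
    (hcf : c ∈ on {l | l = [] ∨ ∃ v ∈ l, v ∈ far x ρ}) : deg (half x) L c = 0 := by
  rw [deg_half_eq]
  refine deg_of_far cuts_half hL hε
    (push_mem_small _ (A := Set.univ) (fun v _ w _ h => by rwa [dist_sub_right]) (mem_on_univ _) hc)
    (push_mem _ (t := {l | l = [] ∨ ∃ v ∈ l, v ∈ far 0 ρ}) ?_ hcf)
  rintro l (rfl | ⟨v, hv, hvf⟩)
  · exact Or.inl rfl
  · exact Or.inr ⟨v - x, List.mem_map.2 ⟨v, hv, rfl⟩, sub_mem_far.2 hvf⟩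

theorem deg_half_congr_center {L : List ι} (hL : ∀ i, i ∈ L) {ε ρ : ℝ} {x y : ι → ℝ}
    (hε : ε + dist x y < ρ) {c : TupleChain (ι → ℝ)}
    (hc : c ∈ on (small ε)) (hb : bdry c ∈ on (within (far x ρ ∩ far y ρ))) :
    deg (half x) L c = deg (half y) L c := by
  rw [deg_half_eq, deg_half_eq L y]
  exact deg_push_sub_eq cuts_half hL hε hc hb

theorem add_smul_cap_mem (f : X → ZMod 2) (e : ZMod 2) {c : TupleChain X} {s : Set (List X)}
    (hs : ∀ l ∈ s, l ≠ []) (hc : c ∈ on s) :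
    cap f c + e • c ∈ on {l | ∃ v ∈ l, f v ≠ e} := by
  refine map_mem_of_on (cap f + e • LinearMap.id) (fun l hl => ?_) hc
  match l, hl with
  | [], hl => exact absurd rfl (hs _ hl)
  | v :: l, hl =>
    rw [LinearMap.add_apply, cap_tup_cons, LinearMap.smul_apply, LinearMap.id_apply, ← add_smul]
    by_cases h : f v = e
    · rw [h, ZModModule.add_self, zero_smul]
      exact zero_mem _
    · exact Submodule.smul_mem _ _ (tup_mem_on ⟨v, by simp, h⟩)

theorem ne_nil_of_len_succ {n : ℕ} : ∀ l ∈ len X (n + 1), l ≠ [] := by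
  rintro l hl rfl
  simp [len] at hl

theorem IsFundamental.deg_cap {L : List ι} (hL : ∀ i, i ∈ L) {q x : ι → ℝ} {R η s : ℝ}
    {G : TupleChain (ι → ℝ)} (hG : IsFundamental L q R η G) (hx : x ∈ ball q R) (hη : η < s)
    {f : (ι → ℝ) → ZMod 2} (hf : ∀ v ∉ far x s, f v = f x) :
    deg (half x) L (cap f G) = f x := by
  have h1 := add_smul_cap_mem f (f x) (ne_nil_of_len_succ) hG.mem_len
  have h2 : deg (half x) L (cap f G + f x • G) = 0 := by
    refine deg_half_of_far hL hη
      (add_mem (cap_mem f hG.mem_small) (Submodule.smul_mem _ _ hG.mem_small)) (on_mono ?_ h1)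
    rintro l ⟨v, hv, hne⟩
    exact Or.inr ⟨v, hv, by_contra fun h => hne (hf v h)⟩
  rw [map_add, map_smul, hG.deg_eq x hx, smul_eq_mul, mul_one] at h2
  exact eq_of_add_eq_zero_two h2

/-- If the intersection of the level change of `f` with the sheet has degree zero, then `f` takes a
single value near the centre, off the sheet. -/
theorem Sheet.exists_ball_eq_of_deg [DecidableEq κ] (S : Sheet ι κ) {L : List ι} (hL : ∀ i, i ∈ L) {K : List κ}
    (hKn : K.Nodup) (hK : ∀ i, i ∈ K) (hLK : L.length = K.length + 1) {V : Set (ι → ℝ)}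
    {u : κ → ℝ} (hu : ‖u‖ < 1) {R : ℝ} (hR : 0 < R) (hV : closedBall (S.φ u) R ⊆ V) :
    ∃ ρ > 0, ∀ f, LocConstOff f V S.carrier → ∀ x ∈ ball (S.φ u) ρ \ S.carrier,
      ∀ y ∈ ball (S.φ u) ρ \ S.carrier, ∃ η₀ > 0, ∀ η, 0 < η → η ≤ η₀ →
        ∀ G, IsFundamental L (S.φ u) R η G →
          deg (half 0) K (push (fun v => S.r v - u) (kap f G)) = 0 → f x = f y := by
  set q := S.φ u with hq
  have hui : ∀ i, |u i| ≤ ‖u‖ := fun i => by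
    rw [← Real.norm_eq_abs]
    exact norm_le_pi_norm u i
  have hrq : S.r q = u := by
    rw [hq, S.r_φ, clamp_of_le fun i => (hui i).trans hu.le]
  obtain ⟨ρ₂, hρ₂, hρ₂u, hgap⟩ := S.exists_gap (isCompact_closedBall q R) u hR
    (b := 1 - ‖u‖) (by linarith)
  have hclamp : ∀ y, y - u ∈ far 0 ρ₂ → clamp y - u ∈ far 0 ρ₂ := fun y hy =>
    clamp_sub_mem_far (fun i => by linarith [hui i]) hy
  obtain ⟨ρ₃, hρ₃, hr⟩ : ∃ ρ₃ > 0, ∀ v, S.r v - u ∈ far 0 ρ₂ → v ∈ far q ρ₃ := by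
    obtain ⟨ρ₃, hρ₃, h⟩ := Metric.continuous_iff.1 S.continuous_r q ρ₂ hρ₂
    refine ⟨ρ₃, hρ₃, fun v hv => (mem_far_iff hρ₃).2 (not_lt.1 fun h' => ?_)⟩
    have := h v h'
    rw [hrq] at this
    exact absurd ((mem_far_iff hρ₂).1 (sub_mem_far.1 hv)) (not_le.2 this)
  set ρ₄ := min R ρ₃ with hρ₄
  have hρ₄0 : 0 < ρ₄ := lt_min hR hρ₃
  have hρ₄R : ρ₄ ≤ R := min_le_left _ _
  have hρ₄3 : ρ₄ ≤ ρ₃ := min_le_right _ _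
  refine ⟨ρ₄ / 8, by positivity, fun f hf => ?_⟩
  have hloc : ∀ x ∈ ball q (ρ₄ / 8) \ S.carrier, ∃ s > 0, ∀ v, v ∉ far x s →
      v ∉ S.carrier ∧ f v = f x := by
    rintro x ⟨hx, hxD⟩
    have h1 := hf x ⟨hV (ball_subset_closedBall (ball_subset_ball (by linarith) hx)), hxD⟩
    have h2 := S.isClosed_carrier.isOpen_compl.mem_nhds hxD
    obtain ⟨s, hs, h⟩ := Metric.eventually_nhds_iff.1 (h1.and h2)
    refine ⟨s, hs, fun v hv => ?_⟩
    have := h (lt_of_not_ge fun h' => hv ((mem_far_iff hs).2 h'))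
    exact ⟨this.2, this.1⟩
  intro x hx y hy
  obtain ⟨s₁, hs₁, hsx⟩ := hloc x hx
  obtain ⟨s₂, hs₂, hsy⟩ := hloc y hy
  obtain ⟨s, hs, hs1, hs2, hsρ⟩ : ∃ s > 0, s ≤ s₁ ∧ s ≤ s₂ ∧ s ≤ ρ₄ :=
    ⟨min (min s₁ s₂) ρ₄, by positivity, (min_le_left _ _).trans (min_le_left _ _),
      (min_le_left _ _).trans (min_le_right _ _), min_le_right _ _⟩
  obtain ⟨δ₁, hδ₁, hφ⟩ := S.exists_modulus_φ (ε := s / 4) (by positivity)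
  obtain ⟨ε, hε, hεδ, hερ⟩ : ∃ ε > 0, 2 * ε ≤ δ₁ ∧ 2 * ε ≤ ρ₂ :=
    ⟨min δ₁ ρ₂ / 2, by positivity, by linarith [min_le_left δ₁ ρ₂], by linarith [min_le_right δ₁ ρ₂]⟩
  obtain ⟨δ₂, hδ₂, hr2⟩ := exists_modulus (isCompact_closedBall q (R + 1)) S.continuous_r hε
  obtain ⟨δ₃, hδ₃, hφr⟩ := exists_modulus (isCompact_closedBall q (R + 1))
    (S.continuous_φ.comp S.continuous_r) (ε := s / 8) (by positivity)
  obtain ⟨η₀, hη₀, h1, h2, h3, h4, h5⟩ : ∃ η₀ > 0, η₀ ≤ δ₂ ∧ 3 * η₀ ≤ δ₃ ∧ 2 * η₀ ≤ ρ₂ ∧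
      2 * η₀ ≤ 1 ∧ 16 * η₀ ≤ s := by
    refine ⟨min (min δ₂ (δ₃ / 3)) (min (ρ₂ / 2) (min (1 / 2) (s / 16))), by positivity, ?_⟩
    have a1 := min_le_left (min δ₂ (δ₃ / 3)) (min (ρ₂ / 2) (min (1 / 2) (s / 16)))
    have a2 := min_le_right (min δ₂ (δ₃ / 3)) (min (ρ₂ / 2) (min (1 / 2) (s / 16)))
    have a3 := min_le_left δ₂ (δ₃ / 3)
    have a4 := min_le_right δ₂ (δ₃ / 3)
    have a5 := min_le_left (ρ₂ / 2) (min (1 / 2) (s / 16))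
    have a6 := min_le_right (ρ₂ / 2) (min (1 / 2) (s / 16))
    have a7 := min_le_left (1 / 2) (s / 16)
    have a8 := min_le_right (1 / 2) (s / 16)
    refine ⟨?_, ?_, ?_, ?_, ?_⟩ <;> linarith
  refine ⟨η₀, hη₀, fun η hη hηη G hG hdeg => ?_⟩
  set z := kap f G with hz
  have hzD : z ∈ on (within (thick (2 * η) S.carrier)) :=
    hf.kap_mem (convex_closedBall q R) hV hG.mem_small hG.mem_within
  have hzB : z ∈ on (within (closedBall q R)) := kap_mem f (hered_within _) hG.mem_within
  have hzA := mem_within_inter hzB hzD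
  have hzη : z ∈ on (small η) := kap_mem f (hered_small _) hG.mem_small
  have hzb : bdry z ∈ on (within (far q R)) := by
    rw [hz, bdry_kap]
    exact kap_mem f (hered_within _) hG.bdry_mem
  have hbz := mem_within_inter hzb (bdry_mem (hered_within _) hzA)
  have hball : closedBall q R ⊆ closedBall q (R + 1) := closedBall_subset_closedBall (by linarith)
  set z' := push (fun v => S.r v - u) z with hz'
  have hz'ε : z' ∈ on (small ε) := by
    refine push_mem_small _ (A := closedBall q R) (fun v hv w hw h => ?_) hzB hzη
    rw [dist_sub_right]
    exact hr2 v (hball hv) w (hball hw) (by linarith)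
  have hgap' : ∀ v ∈ far q R ∩ (closedBall q R ∩ thick (2 * η) S.carrier),
      S.r v - u ∈ far 0 ρ₂ := fun v hv =>
    hgap v hv.2.1 hv.1 (thick_mono (by linarith) hv.2.2)
  have hz'b : bdry z' ∈ on (within (far 0 ρ₂)) := by
    rw [hz', bdry_push]
    exact push_mem_within _ hgap' hbz
  have hz'n : z' ∈ on (len _ (K.length + 1)) := by
    rw [← hLK]
    exact push_mem_len _ (kap_mem_len f hG.mem_len)
  obtain ⟨w, -, hwε, hw⟩ := exists_len_filling 0 hε.le (by linarith) hKn hK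
    (ε' := 2 * ε) (by linarith) hz'ε hz'n hz'b (bdry_kaps_eq_zero_of_deg _ _ hz'n hdeg)
  set ψ : (κ → ℝ) → ι → ℝ := fun y => S.φ (y + u) with hψ
  have hψr : ∀ v, ψ (S.r v - u) = S.φ (S.r v) := fun v => by simp [hψ]
  set c₁ := push ψ w with hc₁
  set c₂ := prism (fun v => v) (fun v => S.φ (S.r v)) z with hc₂
  set c := cap f G + c₁ + c₂ with hc
  have hφfar : ∀ y, y - u ∈ far 0 ρ₂ → S.φ y ∈ far q ρ₄ := fun y hy =>
    far_mono hρ₄3 (hr _ (by rw [S.r_φ]; exact hclamp y hy))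
  have hcb : bdry c ∈ on (within (far q ρ₄)) := by
    have e : bdry c = cap f (bdry G) + push ψ (z' + bdry w) +
        prism (fun v => v) (fun v => S.φ (S.r v)) (bdry z) := by
      rw [hc, map_add, map_add, bdry_cap, ← hz, hc₁, bdry_push, hc₂, bdry_prism, map_add, hz', push_push,
        push_id, show ψ ∘ (fun v => S.r v - u) = fun v => S.φ (S.r v) from funext hψr]
      apply eq_of_add_eq_zero_two
      abel_nf
      simp only [two_zsmul_zero, add_zero]
    rw [e]
    refine add_mem (add_mem ?_ ?_) ?_
    · exact cap_mem f (on_mono (within_mono (far_mono hρ₄R)) hG.bdry_mem)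
    · refine push_mem_within _ (fun y hy => hφfar _ ?_) hw
      rwa [add_sub_cancel_right]
    · refine prism_mem_within _ _ (fun v hv => far_mono hρ₄R hv.1)
        (fun v hv => hφfar _ (hgap' v hv)) hbz
  have hc₁s : c₁ ∈ on (small (s / 4)) := by
    refine push_mem_small _ (A := Set.univ) (fun v _ w _ h => ?_) (mem_on_univ _) hwε
    refine hφ _ _ ?_
    rw [dist_add_right]
    linarith
  have hc₂s : c₂ ∈ on (small (s / 4)) := by
    have key : ∀ v ∈ closedBall q R, ∀ w ∈ closedBall q R, dist v w ≤ η →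
        dist (S.φ (S.r v)) (S.φ (S.r w)) ≤ s / 8 := fun v hv w hw h =>
      hφr v (hball hv) w (hball hw) (by linarith)
    refine prism_mem_small _ _ (fun v hv w hw h => by linarith)
      (fun v hv w hw h => (key v hv.1 w hw.1 h).trans (by linarith)) ?_ hzA hzη
    rintro v ⟨hv, d, hd, hvd⟩ w ⟨hw, -⟩ h
    have hdK : d ∈ closedBall q (R + 1) := by
      rw [mem_closedBall] at hv ⊢
      rw [dist_comm] at hvd
      linarith [dist_triangle d v q]
    have hdw : dist d w ≤ δ₃ := by
      rw [dist_comm] at hvd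
      linarith [dist_triangle d v w]
    have := hφr d hdK w (hball hw) hdw
    simp only [Function.comp_apply] at this
    rw [S.φ_r hd] at this
    linarith [dist_triangle v d (S.φ (S.r w))]
  have hcs : c ∈ on (small (s / 4)) :=
    add_mem (add_mem (on_mono (small_mono (by linarith)) (cap_mem f hG.mem_small)) hc₁s) hc₂s
  have hval : ∀ x ∈ ball q (ρ₄ / 8), (∀ v ∉ far x s, v ∉ S.carrier ∧ f v = f x) →
      deg (half x) L c = f x := by
    intro x hx hxs
    have hD : ∀ d ∈ S.carrier, d ∈ far x s := fun d hd => by_contra fun h => (hxs d h).1 hd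
    have hs2 : far x s ⊆ far x (s / 2) := far_mono (by linarith)
    have e1 : deg (half x) L c₁ = 0 := by
      refine deg_half_of_far hL (by linarith) hc₁s (on_mono (within_subset_exists _)
        (push_mem_within (A := Set.univ) _ (fun y _ => hD _ ⟨_, rfl⟩) (mem_on_univ _)))
    have e2 : deg (half x) L c₂ = 0 := by
      refine deg_half_of_far hL (ρ := s / 2) (by linarith) hc₂s (on_mono (within_subset_exists _)
        (prism_mem_within _ _ ?_ (fun y _ => hs2 (hD _ ⟨_, rfl⟩)) hzD))
      rintro v ⟨d, hd, hvd⟩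
      rw [dist_comm] at hvd
      exact far_mono (by linarith) (mem_far_of_dist (hD d hd) hvd)
    rw [hc, map_add, map_add, e1, e2, add_zero, add_zero]
    exact hG.deg_cap hL (ball_subset_ball (by linarith) hx) (by linarith) fun v hv => (hxs v hv).2
  rw [← hval x hx.1 fun v hv => hsx v fun h => hv (far_mono hs1 h),
    ← hval y hy.1 fun v hv => hsy v fun h => hv (far_mono hs2 h)]
  have hx1 := mem_ball.1 hx.1
  have hy1 := mem_ball.1 hy.1
  refine deg_half_congr_center hL (ρ := ρ₄ - ρ₄ / 8) ?_ hcs (on_mono (within_mono fun v hv => ?_) hcb)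
  · linarith [dist_triangle_right x y q]
  · rw [dist_comm] at hx1 hy1
    exact ⟨mem_far_of_center hv hx1.le, mem_far_of_center hv hy1.le⟩

/-- `f` takes both values arbitrarily close to `q`, off `D`. -/
def JumpsAt {Y : Type*} [TopologicalSpace Y] (f : Y → ZMod 2) (D : Set Y) (q : Y) : Prop :=
  ∀ U ∈ 𝓝 q, ∃ x ∈ U \ D, ∃ y ∈ U \ D, f x ≠ f y

theorem Sheet.exists_add_eq [DecidableEq ι] [DecidableEq κ] (S : Sheet ι κ)
    (hc : Fintype.card ι = Fintype.card κ + 1) {V : Set (ι → ℝ)} {u : κ → ℝ} (hu : ‖u‖ < 1)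
    (hV : V ∈ 𝓝 (S.φ u)) {f g : (ι → ℝ) → ZMod 2} (hf : LocConstOff f V S.carrier)
    (hg : LocConstOff g V S.carrier) (hfj : JumpsAt f S.carrier (S.φ u))
    (hgj : JumpsAt g S.carrier (S.φ u)) :
    ∃ U ∈ 𝓝 (S.φ u), ∀ x ∈ U \ S.carrier, ∀ y ∈ U \ S.carrier, f x + g x = f y + g y := by
  obtain ⟨R, hR, hRV⟩ := Metric.nhds_basis_closedBall.mem_iff.1 hV
  have hl : (Finset.univ : Finset ι).toList.length = (Finset.univ : Finset κ).toList.length + 1 := by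
    simp [hc]
  obtain ⟨ρ, hρ, h⟩ := S.exists_ball_eq_of_deg (L := Finset.univ.toList) (by simp)
    (K := Finset.univ.toList) (Finset.nodup_toList _) (by simp) hl hu hR hRV
  obtain ⟨x₁, hx₁, y₁, hy₁, hne₁⟩ := hfj _ (ball_mem_nhds _ hρ)
  obtain ⟨x₂, hx₂, y₂, hy₂, hne₂⟩ := hgj _ (ball_mem_nhds _ hρ)
  have hfg : LocConstOff (f + g) V S.carrier := fun x hx => by
    filter_upwards [hf x hx, hg x hx] with y h1 h2
    rw [Pi.add_apply, Pi.add_apply, h1, h2]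
  refine ⟨_, ball_mem_nhds _ hρ, fun x hx y hy => ?_⟩
  obtain ⟨η₁, hη₁, h₁⟩ := h f hf x₁ hx₁ y₁ hy₁
  obtain ⟨η₂, hη₂, h₂⟩ := h g hg x₂ hx₂ y₂ hy₂
  obtain ⟨η₃, hη₃, h₃⟩ := h (f + g) hfg x hx y hy
  have hη : 0 < min (min η₁ η₂) η₃ := by positivity
  obtain ⟨G, hG⟩ := exists_isFundamental (Finset.nodup_toList (Finset.univ : Finset ι)) (S.φ u) hR hη
  refine h₃ _ hη (min_le_right _ _) G hG ?_
  rw [kap_add_apply, map_add, map_add,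
    Fin.eq_one_of_ne_zero _ fun h0 => hne₁ (h₁ _ hη ((min_le_left _ _).trans (min_le_left _ _)) G hG h0),
    Fin.eq_one_of_ne_zero _ fun h0 => hne₂ (h₂ _ hη ((min_le_left _ _).trans (min_le_right _ _)) G hG h0)]
  rfl

end TupleChain

end

noncomputable section
namespace TupleChain

open Finsupp Metric Topology

variable {ι κ : Type*} [Fintype ι] [Fintype κ]

/-- A small chain `w` whose boundary is, inside a cube, a fine subdivision of the sheet. -/
def Sheet.IsFilling (S : Sheet ι κ) (L : List ι) (K : List κ) (p : ι → ℝ) (R ε : ℝ)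
    (w : TupleChain (ι → ℝ)) : Prop :=
  w ∈ on (len _ (L.length + 1)) ∧ w ∈ on (small ε) ∧ ∃ δ G, IsFundamental K 0 1 δ G ∧
    push S.φ G ∈ on (len _ L.length) ∧ push S.φ G ∈ on (small ε) ∧
    push S.φ G ∈ on (within S.carrier) ∧
    ∃ Q ∈ on (len _ L.length), Q ∈ on (small ε) ∧ Q ∈ on (within (far p R)) ∧
      bdry w = push S.φ G + Q

theorem Sheet.exists_isFilling [DecidableEq ι] [DecidableEq κ] (S : Sheet ι κ) {L : List ι}
    (hLn : L.Nodup) (hL : ∀ i, i ∈ L) {K : List κ} (hKn : K.Nodup) (hLK : L.length = K.length + 1)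
    {p : ι → ℝ} {R : ℝ} (hR : 0 < R) (hS : ∀ y ∈ far 0 1, S.φ y ∈ far p R) {ε : ℝ} (hε : 0 < ε) :
    ∃ w, S.IsFilling L K p R ε w := by
  set ε₁ := min ε R / 2 with hε₁
  have h1 := min_le_left ε R
  have h2 := min_le_right ε R
  have h3 : 0 < min ε R := lt_min hε hR
  obtain ⟨δ, hδ, hφ⟩ := S.exists_modulus_φ (ε := ε₁) (by positivity)
  obtain ⟨G, hG⟩ := exists_isFundamental hKn 0 one_pos hδ
  have hP : push S.φ G ∈ on (small ε₁) := push_mem_small _ (fun x _ y _ h => hφ x y h)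
    (mem_on_univ _) hG.mem_small
  have hPl : push S.φ G ∈ on (len _ L.length) := by
    rw [hLK]
    exact push_mem_len _ hG.mem_len
  have hPε := on_mono (small_mono (by linarith : ε₁ ≤ ε)) hP
  obtain ⟨w, hwl, hwε, hw⟩ := exists_len_filling p (ε := ε₁) (ε' := ε) (ρ := R) (by linarith) (by linarith)
    hLn hL (by linarith) hP hPl (by rw [bdry_push]; exact push_mem_within _ hS hG.bdry_mem)
    (bdry_kaps_of_len _ _ hPl)
  refine ⟨w, hwl, hwε, δ, G, hG, hPl, hPε,
    push_mem_within (A := Set.univ) (B := S.carrier) _ (fun y _ => ⟨y, rfl⟩) (mem_on_univ _),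
    _, add_mem hPl (bdry_mem_len hwl), add_mem hPε (bdry_mem (hered_small _) hwε), hw, ?_⟩
  rw [← add_assoc, ZModModule.add_self, zero_add]

theorem Sheet.IsFilling.mono {S : Sheet ι κ} {L : List ι} {K : List κ} {p : ι → ℝ} {R ε ε' : ℝ}
    {w : TupleChain (ι → ℝ)} (hw : S.IsFilling L K p R ε w) (h : ε ≤ ε') :
    S.IsFilling L K p R ε' w := by
  obtain ⟨h1, h2, δ, G, h3, h4, h5, h6, Q, h7, h8, h9, h10⟩ := hw
  exact ⟨h1, on_mono (small_mono h) h2, δ, G, h3, h4, on_mono (small_mono h) h5, h6, Q, h7,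
    on_mono (small_mono h) h8, h9, h10⟩

/-- The local degree at `x` of a chain. -/
def localDeg (L : List ι) (w : TupleChain (ι → ℝ)) (x : ι → ℝ) : ZMod 2 :=
  deg (fun i v => half v i x) L w

theorem Sheet.exists_localDeg_eq (S : Sheet ι κ) {L : List ι} (hL : ∀ i, i ∈ L) (K : List κ)
    {p x : ι → ℝ} {R : ℝ} (hR : 0 < R) (hx : x ∈ ball p R \ S.carrier) :
    ∃ s > 0, ∀ w, S.IsFilling L K p R s w → ∀ y ∈ ball x s, localDeg L w y = localDeg L w x := by
  obtain ⟨t, ht, htx⟩ := Metric.isOpen_iff.1 (isOpen_ball.sdiff S.isClosed_carrier) x hx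
  have hfar : S.carrier ∪ far p R ⊆ far x t := by
    intro v hv
    refine (mem_far_iff ht).2 (not_lt.1 fun h => ?_)
    have := htx h
    rcases hv with hv | hv
    · exact this.2 hv
    · exact absurd (mem_ball.1 this.1) (not_lt.2 ((mem_far_iff hR).1 hv))
  refine ⟨t / 8, by positivity, fun w hw y hy => ?_⟩
  obtain ⟨-, h2, δ, G, h3, -, -, h6, Q, -, -, h9, h10⟩ := hw
  rw [localDeg, localDeg, deg_half_flip_eq, deg_half_flip_eq L x]
  refine deg_push_sub_eq cuts_half_flip hL (ρ := t - t / 8) (by linarith [mem_ball.1 hy]) h2 ?_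
  rw [h10]
  have h11 : push S.φ G + Q ∈ on (within (S.carrier ∪ far p R)) :=
    add_mem (on_mono (within_mono Set.subset_union_left) h6)
      (on_mono (within_mono Set.subset_union_right) h9)
  refine on_mono (within_mono fun v hv => ?_) h11
  rw [mem_ball, dist_comm] at hy
  exact ⟨mem_far_of_center (hfar hv) hy.le, far_mono (by linarith) (hfar hv)⟩

theorem within_thick {X : Type*} [PseudoMetricSpace X] {η : ℝ} {A : Set X} {l : List X}
    (hl : l ∈ small η) (h : ∃ v ∈ l, v ∈ A) : l ∈ within (thick η A) := by
  obtain ⟨v, hv, hvA⟩ := h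
  exact fun w hw => ⟨v, hvA, hl w hw v hv⟩

/-- The local degree of a filling is not constant near a point of the sheet. -/
theorem Sheet.exists_localDeg_ne (S : Sheet ι κ) {L : List ι} (hL : ∀ i, i ∈ L) {K : List κ}
    (hK : ∀ i, i ∈ K) {p : ι → ℝ} {R : ℝ} {u : κ → ℝ} (hu : ‖u‖ < 1) (hq : S.φ u ∈ ball p R)
    {U : Set (ι → ℝ)} (hU : U ∈ 𝓝 (S.φ u)) (e : ZMod 2) :
    ∃ ρ > 0, closedBall (S.φ u) ρ ⊆ U ∧ ∃ ε > 0, ∀ w, S.IsFilling L K p R ε w →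
      ∀ G, IsFundamental L (S.φ u) ρ ε G → ∃ l ∈ G.support, ∃ v ∈ l, v ∉ S.carrier ∧
        localDeg L w v ≠ e := by
  set q := S.φ u with hqu
  obtain ⟨ρ', hρ', hρU⟩ := Metric.nhds_basis_closedBall.mem_iff.1 hU
  rw [mem_ball, dist_comm] at hq
  obtain ⟨ρ, hρ, hρρ, hρR⟩ : ∃ ρ > 0, ρ ≤ ρ' ∧ ρ ≤ R - dist p q :=
    ⟨min ρ' (R - dist p q), lt_min hρ' (by linarith), min_le_left _ _, min_le_right _ _⟩
  refine ⟨ρ, hρ, (closedBall_subset_closedBall hρρ).trans hρU, ?_⟩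
  obtain ⟨B, hB⟩ := S.isCompact_carrier.isBounded.subset_closedBall q
  have hBK : thick 1 S.carrier ⊆ closedBall q (B + 1) := by
    rintro v ⟨d, hd, hvd⟩
    have := mem_closedBall.1 (hB hd)
    rw [mem_closedBall]
    linarith [dist_triangle v d q]
  obtain ⟨c, hc, hc1, hgap⟩ := S.exists_gap (isCompact_closedBall q (B + 1)) u (half_pos hρ) one_pos
  obtain ⟨δ, hδ, hr⟩ := exists_modulus (isCompact_closedBall q (B + 1)) S.continuous_r (half_pos hc)
  obtain ⟨ε, hε, hεc, hεδ, hερ⟩ : ∃ ε > 0, 2 * ε ≤ c ∧ 2 * ε ≤ δ ∧ 2 * ε ≤ ρ / 2 := by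
    refine ⟨min (min c δ) (ρ / 2) / 2, by positivity, ?_⟩
    have a1 := min_le_left (min c δ) (ρ / 2)
    have a2 := min_le_right (min c δ) (ρ / 2)
    have a3 := min_le_left c δ
    have a4 := min_le_right c δ
    refine ⟨?_, ?_, ?_⟩ <;> linarith
  refine ⟨ε, hε, fun w hw G hG => ?_⟩
  by_contra hcon
  push Not at hcon
  obtain ⟨hwl, hwε, δ', G', hG', hPl, hPε, hPD, Q, hQl, hQε, hQ, hwPQ⟩ := hw
  set P := push S.φ G' with hP
  obtain ⟨N, hN, hNε, N', hN', hNN⟩ := exists_localization hL hε.le hε.le hwl hwε hG.mem_len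
    hG.mem_small hPl hPε hPD hQl hQε hQ hwPQ hG.bdry_mem
  change bdry (cap (localDeg L w) G + _ + N + N') = 0 at hNN
  set θ := fun y => deg (half y) L G with hθ
  set g := localDeg L w with hg
  set Z := cap g G + e • G with hZ
  have hGs : G ∈ on {l | ∀ v ∈ l, v ∉ S.carrier → g v = e} := fun l hl => hcon l hl
  have hZε : Z ∈ on (small ε) := add_mem (cap_mem g hG.mem_small) (Submodule.smul_mem _ _ hG.mem_small)
  have hZD : Z ∈ on (within (thick ε S.carrier)) := by
    have h1 := add_smul_cap_mem g e ne_nil_of_len_succ hG.mem_len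
    have h2 := add_mem (cap_mem g hGs) (Submodule.smul_mem _ e hGs)
    refine on_mono ?_ (mem_on_inter hZε (mem_on_inter h1 h2))
    rintro l ⟨hl, ⟨v, hv, hne⟩, hl'⟩
    exact within_thick hl ⟨v, hv, by_contra fun h => hne (hl' v hv h)⟩
  have hwθ : w + cap θ w ∈ on (within (far q (ρ / 2))) := by
    refine on_mono ?_ (add_cap_mem_eq θ hwε)
    rintro l ⟨hl, rfl | ⟨v, hv, h0⟩⟩ y hy
    · simp at hy
    · have hvf : v ∈ far q ρ := by
        refine (mem_far_iff hρ).2 (not_lt.1 fun h => ?_)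
        have := hG.deg_eq v h
        rw [hθ] at h0
        simp only at h0
        rw [h0] at this
        exact absurd this (by decide)
      exact far_mono (by linarith) (mem_far_of_dist hvf (hl v hv y hy))
  have hpq : far p R ⊆ far q ρ := fun v hv => far_mono hρR (mem_far_of_center hv le_rfl)
  have hhalf : far q ρ ⊆ far q (ρ / 2) := far_mono (by linarith)
  have hN'q : N' ∈ on (within (far q (ρ / 2))) := by
    refine on_mono (within_mono ?_) hN'
    rintro v ⟨d, hd, hvd⟩
    rw [dist_comm] at hvd
    have hdq : d ∈ far q ρ := by
      rcases hd with hd | hd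
      · exact hpq hd
      · exact hd
    exact far_mono (by linarith) (mem_far_of_dist hdq hvd)
  set Y := P + bdry (Z + N) with hY
  have hYeq : Y = Q + e • bdry G + bdry (w + cap θ w) + bdry N' := by
    apply eq_of_add_eq_zero_two
    rw [← hNN, hY, hZ]
    simp only [map_add, map_smul, hwPQ]
    apply eq_of_add_eq_zero_two
    abel_nf
    simp only [two_zsmul_zero, add_zero]
  have hYfar : Y ∈ on (within (far q (ρ / 2))) := by
    rw [hYeq]
    refine add_mem (add_mem (add_mem ?_ (Submodule.smul_mem _ _ ?_)) ?_) ?_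
    · exact on_mono (within_mono (hpq.trans hhalf)) hQ
    · exact on_mono (within_mono hhalf) hG.bdry_mem
    · exact bdry_mem (hered_within _) hwθ
    · exact bdry_mem (hered_within _) hN'q
  have hYD : Y ∈ on (within (thick (2 * ε) S.carrier)) := by
    refine add_mem (on_mono (within_mono (B := thick (2 * ε) S.carrier)
      fun v hv => ⟨v, hv, by rw [dist_self]; linarith⟩) hPD)
      (bdry_mem (hered_within _) (add_mem ?_ ?_))
    · exact on_mono (within_mono (thick_mono (by linarith))) hZD
    · rwa [two_mul]
  have hYε : Y ∈ on (small (2 * ε)) := by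
    refine add_mem (on_mono (small_mono (by linarith)) hPε)
      (bdry_mem (hered_small _) (add_mem (on_mono (small_mono (by linarith)) hZε) ?_))
    rwa [two_mul]
  have hball : thick (2 * ε) S.carrier ⊆ closedBall q (B + 1) :=
    (thick_mono (by linarith)).trans hBK
  have hdeg0 : deg (half 0) K (push (fun v => S.r v - u) Y) = 0 := by
    refine deg_of_far cuts_half hK (half_lt_self hc)
      (push_mem_small _ (fun v hv v' hv' h => ?_) hYD hYε)
      (on_mono (within_subset_exists _) (push_mem_within _ (fun v hv => ?_)
        (mem_within_inter hYfar hYD)))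
    · rw [dist_sub_right]
      exact hr v (hball hv) v' (hball hv') (h.trans hεδ)
    · exact hgap v (hball hv.2) hv.1 (thick_mono hεc hv.2)
  have hdeg1 : deg (half 0) K (push (fun v => S.r v - u) Y) = 1 := by
    rw [hY, map_add, map_add, ← bdry_push, deg_bdry, add_zero, hP, push_push,
      push_congr (h := fun y => y - u) (fun y hy => ?_) hG'.mem_within, ← deg_half_eq]
    · exact hG'.deg_eq u (by rwa [mem_ball_zero_iff])
    · rw [Function.comp_apply, S.r_φ, clamp_of_le fun i => ?_]
      rw [mem_closedBall_zero_iff] at hy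
      rw [← Real.norm_eq_abs]
      exact (norm_le_pi_norm y i).trans hy
  rw [hdeg0] at hdeg1
  exact absurd hdeg1 (by decide)

/-- A sheet whose edge avoids a cube has two local sides in that cube. -/
theorem Sheet.exists_jumpsAt [DecidableEq ι] [DecidableEq κ] (S : Sheet ι κ)
    (hc : Fintype.card ι = Fintype.card κ + 1) {p : ι → ℝ} {R : ℝ} (hR : 0 < R)
    (hS : ∀ y ∈ far 0 1, S.φ y ∈ far p R) :
    ∃ f, LocConstOff f (ball p R) S.carrier ∧
      ∀ u, ‖u‖ < 1 → S.φ u ∈ ball p R → JumpsAt f S.carrier (S.φ u) := by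
  set L := (Finset.univ : Finset ι).toList with hLdef
  set K := (Finset.univ : Finset κ).toList with hKdef
  have hLn : L.Nodup := Finset.nodup_toList _
  have hL : ∀ i, i ∈ L := by simp [hLdef]
  have hK : ∀ i, i ∈ K := by simp [hKdef]
  choose w hw using fun n : ℕ => S.exists_isFilling hLn hL (K := K) (Finset.nodup_toList _)
    (by simp [hLdef, hKdef, hc]) hR hS (ε := 1 / ((n : ℝ) + 1)) (by positivity)
  set 𝒰 := Filter.hyperfilter ℕ with h𝒰
  have hev : ∀ ε > 0, ∀ᶠ n in 𝒰, S.IsFilling L K p R ε (w n) := by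
    intro ε hε
    have h1 : ∀ᶠ n : ℕ in Filter.atTop, 1 / ((n : ℝ) + 1) < ε :=
      tendsto_one_div_add_atTop_nhds_zero_nat.eventually (gt_mem_nhds hε)
    rw [← Nat.cofinite_eq_atTop] at h1
    have h2 : ∀ᶠ n : ℕ in 𝒰, 1 / ((n : ℝ) + 1) < ε := Filter.hyperfilter_le_cofinite h1
    exact h2.mono fun n hn => (hw n).mono hn.le
  obtain ⟨f, hf⟩ : ∃ f : (ι → ℝ) → ZMod 2, ∀ x, ∀ᶠ n in 𝒰, localDeg L (w n) x = f x := by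
    have : ∀ x, ∃ e : ZMod 2, ∀ᶠ n in 𝒰, localDeg L (w n) x = e := by
      intro x
      by_cases h : ∀ᶠ n in 𝒰, localDeg L (w n) x = 0
      · exact ⟨0, h⟩
      · exact ⟨1, (Ultrafilter.eventually_not.2 h).mono fun n hn => Fin.eq_one_of_ne_zero _ hn⟩
    choose f hf using this
    exact ⟨f, hf⟩
  refine ⟨f, fun x hx => ?_, fun u hu hq U hU => ?_⟩
  · obtain ⟨s, hs, h⟩ := S.exists_localDeg_eq hL K hR hx
    filter_upwards [ball_mem_nhds x hs] with y hy
    obtain ⟨n, h1, h2, h3⟩ := ((hev s hs).and ((hf x).and (hf y))).exists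
    rw [← h2, ← h3]
    exact h _ h1 y hy
  · by_contra hcon
    push Not at hcon
    obtain ⟨e, he⟩ : ∃ e, ∀ v ∈ U \ S.carrier, f v = e := by
      by_cases h : ∃ x, x ∈ U \ S.carrier
      · obtain ⟨x, hx⟩ := h
        exact ⟨f x, fun v hv => hcon v hv x hx⟩
      · exact ⟨0, fun v hv => absurd ⟨v, hv⟩ h⟩
    obtain ⟨ρ, hρ, hρU, ε, hε, h⟩ := S.exists_localDeg_ne hL hK hu hq hU e
    obtain ⟨G, hG⟩ := exists_isFundamental hLn (S.φ u) hρ hε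
    have hfin : ∀ᶠ n in 𝒰, ∀ l ∈ G.support, ∀ v ∈ l, localDeg L (w n) v = f v := by
      rw [Filter.eventually_all_finset]
      intro l _
      have := (Filter.eventually_all_finset (l := (𝒰 : Filter ℕ)) (p := fun v n => localDeg L (w n) v = f v)
        (Finset.univ.image l.get)).2 fun v _ => hf v
      refine this.mono fun n hn v hv => hn v ?_
      obtain ⟨i, rfl⟩ := List.mem_iff_get.1 hv
      exact Finset.mem_image_of_mem _ (Finset.mem_univ i)
    obtain ⟨n, h1, h2⟩ := ((hev ε hε).and hfin).exists
    obtain ⟨l, hl, v, hv, hvD, hne⟩ := h _ h1 G hG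
    exact hne ((h2 l hl v hv).trans (he v ⟨hρU (hG.mem_within hl v hv), hvD⟩))

end TupleChain

end

noncomputable section
namespace TupleChain

open Finsupp Metric Topology

variable {ι κ : Type*} [Fintype ι] [Fintype κ]

theorem exists_sheet {φ : (κ → ℝ) → ι → ℝ} (hφ : Continuous φ) (hc : ∀ y, φ (clamp y) = φ y)
    (hi : Set.InjOn φ (closedBall 0 1)) : ∃ S : Sheet ι κ, S.φ = φ := by
  set C : Set (κ → ℝ) := closedBall 0 1 with hC
  have : CompactSpace C := isCompact_iff_compactSpace.1 (isCompact_closedBall _ _)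
  have he : IsClosedEmbedding (fun y : C => φ y) :=
    (hφ.comp continuous_subtype_val).isClosedEmbedding fun y y' h => Subtype.ext (hi y.2 y'.2 h)
  obtain ⟨r, hr⟩ := ContinuousMap.exists_extension' he (⟨Subtype.val, continuous_subtype_val⟩ : C(C, κ → ℝ))
  refine ⟨⟨φ, r, hφ, r.continuous, fun y => ?_, hc⟩, rfl⟩
  rw [← hc y]
  exact congrFun hr ⟨clamp y, clamp_mem_closedBall y⟩

variable {M : Type*} [TopologicalSpace M] {N : Set M}

/-- A sheet parametrising, in a chart of the ambient space, a subset near one of its points. -/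
structure Sheet.Parametrises (S : Sheet ι κ) (e : OpenPartialHomeomorph M (ι → ℝ)) (N : Set M)
    (p : M) (R : ℝ) : Prop where
  pos : 0 < R
  ball_subset : ball (e p) R ⊆ e.target
  φ_zero : S.φ 0 = e p
  φ_far : ∀ y ∈ far 0 1, S.φ y ∈ far (e p) R
  mem_of_carrier : ∀ x ∈ S.carrier, e.symm x ∈ N
  exists_eq : ∀ x ∈ ball (e p) R, e.symm x ∈ N → ∃ u, ‖u‖ < 1 ∧ S.φ u = x

theorem exists_parametrises (e : OpenPartialHomeomorph M (ι → ℝ))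
    (ψ : OpenPartialHomeomorph N (κ → ℝ)) {p : N} (hp : (p : M) ∈ e.source) (hpψ : p ∈ ψ.source) :
    ∃ (S : Sheet ι κ) (R : ℝ), S.Parametrises e N p R := by
  set T : Set (κ → ℝ) := ψ.target ∩ ψ.symm ⁻¹' (Subtype.val ⁻¹' e.source) with hT
  have hTo : IsOpen T := ψ.isOpen_inter_preimage_symm (e.open_source.preimage continuous_subtype_val)
  have hpT : ψ p ∈ T := ⟨ψ.map_source hpψ, by
    rw [Set.mem_preimage, ψ.left_inv hpψ]
    exact hp⟩
  obtain ⟨s, hs, hsT⟩ := Metric.nhds_basis_closedBall.mem_iff.1 (hTo.mem_nhds hpT)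
  set a : (κ → ℝ) → κ → ℝ := fun y => ψ p + s • clamp y with ha
  have haT : ∀ y, a y ∈ T := fun y => hsT (by
    have := mem_closedBall_zero_iff.1 (clamp_mem_closedBall y)
    rw [ha, mem_closedBall, dist_eq_norm, add_sub_cancel_left, norm_smul, Real.norm_of_nonneg hs.le]
    exact mul_le_of_le_one_right hs.le this)
  have hac : Continuous a := by
    have := continuous_clamp (κ := κ)
    rw [ha]
    fun_prop
  set φ : (κ → ℝ) → ι → ℝ := fun y => e (ψ.symm (a y)) with hφdef
  have hclamp : ∀ y : κ → ℝ, y ∈ closedBall 0 1 → clamp y = y := fun y hy => clamp_of_le fun i => by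
    rw [mem_closedBall_zero_iff] at hy
    rw [← Real.norm_eq_abs]
    exact (norm_le_pi_norm y i).trans hy
  have hφ : Continuous φ := by
    rw [continuous_iff_continuousAt]
    intro y
    have h1 : ContinuousAt e (ψ.symm (a y) : M) := e.continuousAt (haT y).2
    have h2 : ContinuousAt ψ.symm (a y) := ψ.symm.continuousAt (haT y).1
    exact ContinuousAt.comp (f := fun y => (ψ.symm (a y) : M)) h1
      (continuous_subtype_val.continuousAt.comp (h2.comp hac.continuousAt))
  have hclamp2 : ∀ y, clamp (clamp y) = clamp y := fun y => hclamp _ (clamp_mem_closedBall y)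
  obtain ⟨S, hS⟩ := exists_sheet hφ (fun y => by rw [hφdef]; simp only [ha, hclamp2]) (by
    intro y hy y' hy' h
    have h1 := e.injOn (haT y).2 (haT y').2 h
    have h2 := ψ.symm.injOn (haT y).1 (haT y').1 (Subtype.ext h1)
    have h3 := smul_right_injective _ hs.ne' (add_left_cancel h2)
    rwa [hclamp y hy, hclamp y' hy'] at h3)
  obtain ⟨O, hO, hOeq⟩ := isOpen_induced_iff.1
    (ψ.isOpen_inter_preimage (isOpen_ball (x := ψ p) (ε := s)))
  have hpO : (p : M) ∈ O := by
    have : p ∈ Subtype.val ⁻¹' O := by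
      rw [hOeq]
      exact ⟨hpψ, mem_ball_self hs⟩
    exact this
  obtain ⟨R, hR, hRO⟩ := Metric.isOpen_iff.1 (e.isOpen_inter_preimage_symm hO) (e p)
    ⟨e.map_source hp, by rw [Set.mem_preimage, e.left_inv hp]; exact hpO⟩
  have hex : ∀ x ∈ ball (e p) R, e.symm x ∈ N → ∃ u, ‖u‖ < 1 ∧ S.φ u = x := by
    intro x hx hxN
    have h1 : (⟨e.symm x, hxN⟩ : N) ∈ ψ.source ∩ ψ ⁻¹' ball (ψ p) s := by
      rw [← hOeq]
      exact (hRO hx).2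
    set n : N := ⟨e.symm x, hxN⟩ with hn
    have hu : ‖s⁻¹ • (ψ n - ψ p)‖ < 1 := by
      rw [norm_smul, norm_inv, Real.norm_of_nonneg hs.le, inv_mul_lt_one₀ hs, ← dist_eq_norm]
      exact h1.2
    refine ⟨s⁻¹ • (ψ n - ψ p), hu, ?_⟩
    rw [hS, hφdef]
    simp only [ha]
    rw [hclamp _ (mem_closedBall_zero_iff.2 hu.le), smul_inv_smul₀ hs.ne', add_sub_cancel,
      ψ.left_inv h1.1]
    exact e.right_inv (hRO hx).1
  have hmem : ∀ x ∈ S.carrier, e.symm x ∈ N := by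
    rintro _ ⟨y, rfl⟩
    rw [hS, hφdef]
    simp only
    rw [e.left_inv (haT y).2]
    exact (ψ.symm (a y)).2
  refine ⟨S, R, hR, fun x hx => (hRO hx).1, ?_, fun y hy => ?_, hmem, hex⟩
  · rw [hS, hφdef]
    simp only [ha]
    rw [hclamp 0 (mem_closedBall_self zero_le_one), smul_zero, add_zero, ψ.left_inv hpψ]
  · refine (mem_far_iff hR).2 (not_lt.1 fun h => ?_)
    obtain ⟨u, hu, huy⟩ := hex _ h (hmem _ ⟨y, rfl⟩)
    have h1 := congrArg S.r huy
    rw [S.r_φ, S.r_φ, hclamp u (mem_closedBall_zero_iff.2 hu.le)] at h1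
    obtain ⟨i, hi⟩ := hy
    rw [Pi.zero_apply, sub_zero] at hi
    have h2 := (norm_le_pi_norm u i).trans_lt hu
    rw [h1, Real.norm_eq_abs, abs_lt, clamp] at h2
    rcases le_abs.1 hi with h3 | h3
    · rw [min_eq_left h3, max_eq_right (by norm_num)] at h2
      exact lt_irrefl _ h2.2
    · rw [max_eq_left ((min_le_right _ _).trans (by linarith))] at h2
      exact lt_irrefl _ h2.1

theorem LocConstOff.comp {Y Z : Type*} [TopologicalSpace Y] [TopologicalSpace Z] {f : Z → ZMod 2}
    {V D : Set Z} (hf : LocConstOff f V D) {g : Y → Z} {V' D' : Set Y}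
    (hg : ∀ y ∈ V' \ D', ContinuousAt g y ∧ g y ∈ V \ D) : LocConstOff (f ∘ g) V' D' :=
  fun y hy => (hg y hy).1.eventually (hf _ (hg y hy).2)

variable {e : OpenPartialHomeomorph M (ι → ℝ)} {p : M} {R : ℝ} {S : Sheet ι κ}

theorem Sheet.Parametrises.mem_carrier_iff (h : S.Parametrises e N p R) {x : ι → ℝ}
    (hx : x ∈ ball (e p) R) : x ∈ S.carrier ↔ e.symm x ∈ N :=
  ⟨h.mem_of_carrier x, fun hN => by
    obtain ⟨u, -, rfl⟩ := h.exists_eq x hx hN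
    exact ⟨u, rfl⟩⟩

theorem Sheet.Parametrises.jumpsAt_comp (h : S.Parametrises e N p R) {f : (ι → ℝ) → ZMod 2} {q : M}
    (hq : q ∈ e.source) (hqR : e q ∈ ball (e p) R) (hf : JumpsAt f S.carrier (e q)) :
    JumpsAt (f ∘ e) N q := by
  intro U hU
  have h1 : e.symm ⁻¹' U ∈ 𝓝 (e q) := by
    refine (e.continuousAt_symm (e.map_source hq)).preimage_mem_nhds ?_
    rwa [e.left_inv hq]
  obtain ⟨x, hx, y, hy, hne⟩ := hf _ (Filter.inter_mem h1 (isOpen_ball.mem_nhds hqR))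
  refine ⟨e.symm x, ⟨hx.1.1, fun h' => hx.2 ((h.mem_carrier_iff hx.1.2).2 h')⟩,
    e.symm y, ⟨hy.1.1, fun h' => hy.2 ((h.mem_carrier_iff hy.1.2).2 h')⟩, ?_⟩
  rwa [Function.comp_apply, Function.comp_apply, e.right_inv (h.ball_subset hx.1.2),
    e.right_inv (h.ball_subset hy.1.2)]

theorem Sheet.Parametrises.jumpsAt_comp_symm (h : S.Parametrises e N p R) {f : M → ZMod 2}
    (hp : p ∈ e.source) (hf : JumpsAt f N p) : JumpsAt (f ∘ e.symm) S.carrier (e p) := by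
  intro U hU
  obtain ⟨x, hx, y, hy, hne⟩ := hf _ (Filter.inter_mem (e.open_source.mem_nhds hp)
    ((e.continuousAt hp).preimage_mem_nhds (Filter.inter_mem hU (ball_mem_nhds _ h.pos))))
  have key : ∀ z, z ∈ (e.source ∩ e ⁻¹' (U ∩ ball (e p) R)) \ N → e z ∈ U \ S.carrier := by
    intro z hz
    refine ⟨hz.1.2.1, fun h' => hz.2 ?_⟩
    rw [← e.left_inv hz.1.1]
    exact (h.mem_carrier_iff hz.1.2.2).1 h'
  refine ⟨e x, key x hx, e y, key y hy, ?_⟩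
  rwa [Function.comp_apply, Function.comp_apply, e.left_inv hx.1.1, e.left_inv hy.1.1]

/-- Near each of its points, a hypersurface has two local sides. -/
theorem exists_local_sides [DecidableEq ι] [DecidableEq κ]
    (hc : Fintype.card ι = Fintype.card κ + 1) (e : OpenPartialHomeomorph M (ι → ℝ))
    (ψ : OpenPartialHomeomorph N (κ → ℝ)) {p : N} (hp : (p : M) ∈ e.source) (hpψ : p ∈ ψ.source) :
    ∃ (W : Set M) (f : M → ZMod 2), IsOpen W ∧ (p : M) ∈ W ∧ LocConstOff f W N ∧
      ∀ q ∈ W ∩ N, JumpsAt f N q := by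
  obtain ⟨S, R, h⟩ := exists_parametrises e ψ hp hpψ
  obtain ⟨f, hf, hfj⟩ := S.exists_jumpsAt hc h.pos h.φ_far
  refine ⟨e.source ∩ e ⁻¹' ball (e p) R, f ∘ e, e.isOpen_inter_preimage isOpen_ball,
    ⟨hp, mem_ball_self h.pos⟩, hf.comp fun y hy => ⟨e.continuousAt hy.1.1, hy.1.2, fun h' => hy.2 ?_⟩,
    fun q hq => h.jumpsAt_comp hq.1.1 hq.1.2 ?_⟩
  · rw [← e.left_inv hy.1.1]
    exact h.mem_of_carrier _ h'
  · obtain ⟨u, hu, hue⟩ := h.exists_eq (e q) hq.1.2 (by rw [e.left_inv hq.1.1]; exact hq.2)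
    rw [← hue]
    exact hfj u hu (hue ▸ hq.1.2)

/-- Two local side functions differ by a constant near each point of a hypersurface. -/
theorem exists_add_eq_of_jumpsAt [DecidableEq ι] [DecidableEq κ]
    (hc : Fintype.card ι = Fintype.card κ + 1) (e : OpenPartialHomeomorph M (ι → ℝ))
    (ψ : OpenPartialHomeomorph N (κ → ℝ)) {p : N} (hp : (p : M) ∈ e.source) (hpψ : p ∈ ψ.source)
    {V : Set M} (hV : V ∈ 𝓝 (p : M)) {f g : M → ZMod 2} (hf : LocConstOff f V N)
    (hg : LocConstOff g V N) (hfj : JumpsAt f N p) (hgj : JumpsAt g N p) :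
    ∃ U ∈ 𝓝 (p : M), ∀ x ∈ U \ N, ∀ y ∈ U \ N, f x + g x = f y + g y := by
  obtain ⟨S, R, h⟩ := exists_parametrises e ψ hp hpψ
  have hu : ‖(0 : κ → ℝ)‖ < 1 := by simp
  have hV' : ball (e p) R ∩ e.symm ⁻¹' V ∈ 𝓝 (e p) := by
    refine Filter.inter_mem (ball_mem_nhds _ h.pos)
      ((e.continuousAt_symm (e.map_source hp)).preimage_mem_nhds ?_)
    rwa [e.left_inv hp]
  have key : ∀ x ∈ (ball (e p) R ∩ e.symm ⁻¹' V) \ S.carrier,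
      ContinuousAt e.symm x ∧ e.symm x ∈ V \ N := fun x hx =>
    ⟨e.continuousAt_symm (h.ball_subset hx.1.1), hx.1.2,
      fun h' => hx.2 ((h.mem_carrier_iff hx.1.1).2 h')⟩
  obtain ⟨U, hU, hUc⟩ := S.exists_add_eq hc hu (V := ball (e p) R ∩ e.symm ⁻¹' V)
    (by rwa [h.φ_zero]) (hf.comp key) (hg.comp key)
    (by rw [h.φ_zero]; exact h.jumpsAt_comp_symm hp hfj)
    (by rw [h.φ_zero]; exact h.jumpsAt_comp_symm hp hgj)
  rw [h.φ_zero] at hU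
  refine ⟨e.source ∩ e ⁻¹' (U ∩ ball (e p) R), Filter.inter_mem (e.open_source.mem_nhds hp)
    ((e.continuousAt hp).preimage_mem_nhds (Filter.inter_mem hU (ball_mem_nhds _ h.pos))),
    fun x hx y hy => ?_⟩
  have key2 : ∀ z, z ∈ (e.source ∩ e ⁻¹' (U ∩ ball (e p) R)) \ N → e z ∈ U \ S.carrier := by
    intro z hz
    refine ⟨hz.1.2.1, fun h' => hz.2 ?_⟩
    rw [← e.left_inv hz.1.1]
    exact (h.mem_carrier_iff hz.1.2.2).1 h'
  have := hUc _ (key2 x hx) _ (key2 y hy)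
  simpa only [Function.comp_apply, e.left_inv hx.1.1, e.left_inv hy.1.1] using this

end TupleChain

end

noncomputable section
namespace TupleChain

open Topology

/-- On a simply connected space, local functions with values in `ZMod 2` that pairwise differ by
locally constant functions off `N` glue, up to locally constant functions. -/
theorem exists_glue {M I : Type*} [TopologicalSpace M] [SimplyConnectedSpace M]
    [LocallyPathConnectedSpace M] {N : Set M} (hN : IsClosed N) (hNd : Dense Nᶜ)
    {W : I → Set M} (hW : ∀ i, IsOpen (W i)) {idx : M → I} (hidx : ∀ x, x ∈ W (idx x))
    {f : I → M → ZMod 2}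
    (hf : ∀ i j, ∀ x ∈ W i ∩ W j, ∃ c, ∀ᶠ y in 𝓝[Nᶜ] x, f i y + f j y = c) :
    ∃ F : M → ZMod 2, ∀ i, ∀ x ∈ W i, ∃ c, ∀ᶠ y in 𝓝[Nᶜ] x, F y + f i y = c := by
  let _ : TopologicalSpace (ZMod 2) := ⊥
  have : DiscreteTopology (ZMod 2) := ⟨rfl⟩
  have hne : ∀ x, (𝓝[Nᶜ] x).NeBot := fun x => mem_closure_iff_nhdsWithin_neBot.1 (hNd x)
  choose! c hc using hf
  have huniq : ∀ i j, ∀ x ∈ W i ∩ W j, ∀ a, (∀ᶠ y in 𝓝[Nᶜ] x, f i y + f j y = a) → c i j x = a := by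
    intro i j x hx a ha
    obtain ⟨y, h1, h2⟩ := ((hc i j x hx).and ha).exists
    exact h1.symm.trans h2
  have hcont : ∀ i j, ContinuousOn (c i j) (W i ∩ W j) := by
    intro i j x hx
    refine (continuousAt_const (y := c i j x)).congr ?_ |>.continuousWithinAt
    filter_upwards [eventually_nhds_nhdsWithin.2 (hc i j x hx),
      ((hW i).inter (hW j)).mem_nhds hx] with y hy hyW
    exact (huniq i j y hyW _ hy).symm
  let Z : FiberBundleCore I M (ZMod 2) :=
    { baseSet := W
      isOpen_baseSet := hW
      indexAt := idx
      mem_baseSet_at := hidx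
      coordChange := fun i j x v => v + c i j x
      coordChange_self := fun i x hx v => by
        rw [huniq i i x ⟨hx, hx⟩ 0 (Filter.Eventually.of_forall fun y => ZModModule.add_self _), add_zero]
      continuousOn_coordChange := fun i j =>
        (continuous_of_discreteTopology (f := fun a : ZMod 2 × ZMod 2 => a.1 + a.2)).comp_continuousOn
          (continuousOn_snd.prodMk ((hcont i j).comp continuousOn_fst fun p hp => hp.1))
      coordChange_comp := fun i j k x hx v => by
        rw [huniq i k x ⟨hx.1.1, hx.2⟩ (c i j x + c j k x), add_assoc]
        filter_upwards [hc i j x hx.1, hc j k x ⟨hx.1.2, hx.2⟩] with y h1 h2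
        rw [← h1, ← h2]
        apply eq_of_add_eq_zero_two
        abel_nf
        simp only [two_zsmul_zero, add_zero] }
  have hcov : IsCoveringMap Z.proj := FiberBundle.isCoveringMap (F := ZMod 2) (E := Z.Fiber)
  obtain ⟨x₀⟩ : Nonempty M := inferInstance
  obtain ⟨s, ⟨-, hs⟩, -⟩ := hcov.existsUnique_continuousMap_lifts (ContinuousMap.id M) x₀
    (⟨x₀, (0 : ZMod 2)⟩ : Z.TotalSpace) rfl
  have hs' : ∀ x, (s x).1 = x := congrFun hs
  set v : M → ZMod 2 := fun x => (s x).2 with hv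
  refine ⟨fun x => f (idx x) x + v x, fun i x hx => ?_⟩
  have h1 : ∀ᶠ y in 𝓝 x, v y + c (idx y) i y = v x + c (idx x) i x := by
    have h2 : ContinuousAt (fun y => ((Z.localTriv i) (s y)).2) x := by
      have hsx : s x ∈ (Z.localTriv i).source := by
        rw [FiberBundleCore.mem_localTriv_source]
        change (s x).1 ∈ W i
        rwa [hs']
      exact continuousAt_snd.comp
        (((Z.localTriv i).toOpenPartialHomeomorph.continuousAt hsx).comp s.continuous.continuousAt)
    have h3 : (fun y => ((Z.localTriv i) (s y)).2) = fun y => v y + c (idx y) i y := by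
      funext y
      rw [FiberBundleCore.localTriv_apply]
      change v y + c (idx (s y).1) i (s y).1 = _
      rw [hs']
    rw [h3] at h2
    exact h2.eventually (IsOpen.mem_nhds (isOpen_discrete {v x + c (idx x) i x}) rfl)
  refine ⟨v x + c (idx x) i x, ?_⟩
  filter_upwards [nhdsWithin_le_nhds h1, nhdsWithin_le_nhds ((hW i).mem_nhds hx),
    self_mem_nhdsWithin] with y h2 h3 h4
  have h5 := hc (idx y) i y ⟨hidx y, h3⟩
  rw [hN.isOpen_compl.nhdsWithin_eq h4] at h5
  rw [← h2, ← h5.self_of_nhds]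
  abel

end TupleChain

end

open TupleChain Topology

/-- A closed embedded surface in a simply connected closed 3-manifold
separates it: the complement of the surface is disconnected. -/
theorem surface_separates
    (M : Type*) [TopologicalSpace M] [Nonempty M] [T2Space M]
    [SecondCountableTopology M] [ConnectedSpace M]
    [ChartedSpace (EuclideanSpace ℝ (Fin 3)) M]
    [CompactSpace M] [SimplyConnectedSpace M]
    (N : Set M) (hNne : N.Nonempty) (hNclosed : IsClosed N)
    (hNcompact : IsCompact N) (hNconn : ConnectedSpace ↥N)
    (hNchart : ChartedSpace (EuclideanSpace ℝ (Fin 2)) ↥N) :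
    ¬ IsConnected ((Set.univ \ N : Set M)) := by
  intro hconn
  rw [← Set.compl_eq_univ_sdiff] at hconn
  have : LocallyPathConnectedSpace M :=
    ChartedSpace.locallyPathConnectedSpace (EuclideanSpace ℝ (Fin 3)) M
  let e : N → OpenPartialHomeomorph M (Fin 3 → ℝ) := fun p =>
    (chartAt (EuclideanSpace ℝ (Fin 3)) (p : M)).transHomeomorph (PiLp.homeomorph 2 _)
  let ψ : N → OpenPartialHomeomorph N (Fin 2 → ℝ) := fun p =>
    (chartAt (EuclideanSpace ℝ (Fin 2)) p).transHomeomorph (PiLp.homeomorph 2 _)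
  have he : ∀ p : N, (p : M) ∈ (e p).source := fun p => mem_chart_source _ _
  have hψ : ∀ p : N, p ∈ (ψ p).source := fun p => mem_chart_source _ _
  choose W f hW hpW hf hj using fun p =>
    exists_local_sides (by simp) (e p) (ψ p) (he p) (hψ p)
  have hdense : Dense Nᶜ := by
    rw [← interior_eq_empty_iff_dense_compl, Set.eq_empty_iff_forall_notMem]
    intro x hx
    have hxN : x ∈ N := interior_subset hx
    obtain ⟨y, hy, -⟩ := hj ⟨x, hxN⟩ x ⟨hpW _, hxN⟩ _ (mem_interior_iff_mem_nhds.1 hx)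
    exact hy.2 hy.1
  classical
  let W' : Option N → Set M := fun i => i.elim Nᶜ W
  let f' : Option N → M → ZMod 2 := fun i => i.elim 0 f
  have hW' : ∀ i, IsOpen (W' i) := by
    rintro (_ | p)
    · exact hNclosed.isOpen_compl
    · exact hW p
  have hf' : ∀ i, LocConstOff (f' i) (W' i) N := by
    rintro (_ | p)
    · exact fun x _ => Filter.Eventually.of_forall fun y => rfl
    · exact hf p
  have hj' : ∀ i, ∀ q ∈ W' i ∩ N, JumpsAt (f' i) N q := by
    rintro (_ | p) q hq
    · exact absurd hq.2 hq.1
    · exact hj p q hq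
  obtain ⟨F, hF⟩ := exists_glue hNclosed hdense hW'
    (idx := fun x => if h : x ∈ N then some ⟨x, h⟩ else none) (f := f') (fun x => by
      by_cases h : x ∈ N
      · simp only [dif_pos h]
        exact hpW ⟨x, h⟩
      · simp only [dif_neg h]
        exact h) (fun i j x hx => by
      by_cases h : x ∈ N
      · obtain ⟨U, hU, hUc⟩ := exists_add_eq_of_jumpsAt (by simp) (e ⟨x, h⟩) (ψ ⟨x, h⟩)
          (he ⟨x, h⟩) (hψ ⟨x, h⟩) (((hW' i).inter (hW' j)).mem_nhds hx)
          (fun y hy => hf' i y ⟨hy.1.1, hy.2⟩) (fun y hy => hf' j y ⟨hy.1.2, hy.2⟩)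
          (hj' i x ⟨hx.1, h⟩) (hj' j x ⟨hx.2, h⟩)
        obtain ⟨z, hzU, hz⟩ := mem_closure_iff_nhds.1 (hdense x) U hU
        refine ⟨f' i z + f' j z, ?_⟩
        filter_upwards [nhdsWithin_le_nhds hU, self_mem_nhdsWithin] with y hy hyN
        exact hUc y ⟨hy, hyN⟩ z ⟨hzU, hz⟩
      · refine ⟨f' i x + f' j x, nhdsWithin_le_nhds ?_⟩
        filter_upwards [hf' i x ⟨hx.1, h⟩, hf' j x ⟨hx.2, h⟩] with y h1 h2
        rw [h1, h2])
  obtain ⟨p, hp⟩ := hNne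
  obtain ⟨c, hc⟩ := hF (some ⟨p, hp⟩) p (hpW ⟨p, hp⟩)
  rw [eventually_nhdsWithin_iff] at hc
  obtain ⟨x, hx, y, hy, hne⟩ := hj ⟨p, hp⟩ p ⟨hpW ⟨p, hp⟩, hp⟩ _ hc
  refine hne ?_
  have hFc : F x = F y := by
    let _ : TopologicalSpace (ZMod 2) := ⊥
    have : DiscreteTopology (ZMod 2) := ⟨rfl⟩
    refine hconn.isPreconnected.constant (f := F) (fun z hz => ?_) hx.2 hy.2
    obtain ⟨a, ha⟩ := hF none z hz
    rw [hNclosed.isOpen_compl.nhdsWithin_eq hz] at ha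
    have ha' : ∀ᶠ y in 𝓝 z, a = F y := ha.mono fun y hy => by
      rw [← hy]
      exact add_zero (F y)
    exact (continuousAt_const.congr ha').continuousWithinAt
  have h1 : F x + f ⟨p, hp⟩ x = F y + f ⟨p, hp⟩ y := (hx.1 hx.2).trans (hy.1 hy.2).symm
  rw [hFc] at h1
  exact add_left_cancel h1
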